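/- Let n ≥ 3, m₁, m₂ ≥ 0, and λ⁺ = (0, m₂+1, …, m₂+1, m₁+m₂+1). Then for every 2 ≤ j ≤ n and every k ∈ ℤ_{≥0}^n: c^{λ⁺}_{j|1}(k_1+1, …, k_{j−1}+1, k_j, k_{j+1}+1, …, k_n+1) = Σ q^{l₁p₁ + l_{j+1} + ⋯ + l_n} · binom_q(m₂; l₁,…,l_n) · binom_q(m₁; p₁,…,p_n), where the sum is over all l, p ∈ ℤ_{≥0}^n with l₁+⋯+l_n = m₂, p₁+⋯+p_n = m₁, and p_i + Σ_{α≠i} l_α = k_i for every 1 ≤ i ≤ n. -/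

import Mathlib

open Finset

namespace CO

/-- The column diagram `dg'(λ)` of a composition, as a finset of boxes `(i, j)`,
`1 ≤ i ≤ n`, `1 ≤ j ≤ λ_i`. -/
def dgF (n : ℕ) (lam : ℕ → ℕ) : Finset (ℕ × ℕ) :=
  (Finset.Icc 1 n).biUnion fun i => (Finset.Icc 1 (lam i)).image fun j => (i, j)

/-- The augmented diagram `d̂g(λ)`: one extra box `(i, 0)` below each column. -/
def augF (n : ℕ) (lam : ℕ → ℕ) : Finset (ℕ × ℕ) :=
  dgF n lam ∪ (Finset.Icc 1 n).image fun i => (i, 0)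

/-- The box `d(u)` directly below a box. -/
def dbox (u : ℕ × ℕ) : ℕ × ℕ := (u.1, u.2 - 1)

/-- The augmented filling `σ̂`: equal to `σ` on positive rows and to `i` on `(i, 0)`. -/
def aug (σ : ℕ × ℕ → ℕ) (u : ℕ × ℕ) : ℕ := if u.2 = 0 then u.1 else σ u

/-- A filling takes values in `{1, …, n}` on the diagram. -/
def IsFilling (n : ℕ) (lam : ℕ → ℕ) (σ : ℕ × ℕ → ℕ) : Prop :=
  ∀ u ∈ dgF n lam, 1 ≤ σ u ∧ σ u ≤ n

/-- Attacking boxes: same row, or consecutive rows with the lower box to the right. -/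
def Attack (u v : ℕ × ℕ) : Prop :=
  u ≠ v ∧ (u.2 = v.2 ∨ (u.2 = v.2 + 1 ∧ u.1 < v.1) ∨ (v.2 = u.2 + 1 ∧ v.1 < u.1))

/-- A non-attacking filling: `σ̂` takes distinct values on attacking pairs of the
augmented diagram. -/
def NonAttacking (n : ℕ) (lam : ℕ → ℕ) (σ : ℕ × ℕ → ℕ) : Prop :=
  ∀ u ∈ augF n lam, ∀ v ∈ augF n lam, Attack u v → aug σ u ≠ aug σ v

/-- The arm of a box `u`. -/
def armF (n : ℕ) (lam : ℕ → ℕ) (u : ℕ × ℕ) : Finset (ℕ × ℕ) :=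
  ((dgF n lam).filter fun v => v.1 < u.1 ∧ v.2 = u.2 ∧ lam v.1 ≤ lam u.1) ∪
    ((augF n lam).filter fun v => u.1 < v.1 ∧ v.2 + 1 = u.2 ∧ lam v.1 < lam u.1)

/-- `a(u) = |arm(u)|`. -/
def armCard (n : ℕ) (lam : ℕ → ℕ) (u : ℕ × ℕ) : ℕ := (armF n lam u).card

/-- The number of inversions of `σ̂`: attacking pairs `u, u'` with `σ̂(u) < σ̂(u')`
and (same row with `u` to the left, or `u'` one row above `u` strictly to the left). -/
def invCard (n : ℕ) (lam : ℕ → ℕ) (σ : ℕ × ℕ → ℕ) : ℕ :=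
  ((augF n lam ×ˢ augF n lam).filter fun p =>
    aug σ p.1 < aug σ p.2 ∧
      ((p.1.2 = p.2.2 ∧ p.1.1 < p.2.1) ∨ (p.2.2 = p.1.2 + 1 ∧ p.2.1 < p.1.1))).card

/-- The descent set of `σ̂`. -/
def desF (n : ℕ) (lam : ℕ → ℕ) (σ : ℕ × ℕ → ℕ) : Finset (ℕ × ℕ) :=
  (dgF n lam).filter fun u => aug σ (dbox u) < aug σ u

/-- The statistic `coinv(σ̂)` (as an integer). -/
def coinv (n : ℕ) (lam : ℕ → ℕ) (σ : ℕ × ℕ → ℕ) : ℤ :=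
  (∑ u ∈ dgF n lam, (armCard n lam u : ℤ)) - invCard n lam σ +
    (((Finset.Icc 1 n ×ˢ Finset.Icc 1 n).filter fun p =>
      p.1 < p.2 ∧ lam p.1 ≤ lam p.2).card : ℤ) +
    ∑ u ∈ desF n lam σ, (armCard n lam u : ℤ)

/-- The statistic `T(σ)`. -/
def Tstat (n : ℕ) (lam : ℕ → ℕ) (σ : ℕ × ℕ → ℕ) : ℤ :=
  coinv n lam σ -
    ∑ u ∈ (dgF n lam).filter fun u => aug σ u ≠ aug σ (dbox u), (armCard n lam u : ℤ)

/-- Antidominant composition: `λ_1 ≤ ⋯ ≤ λ_n`. -/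
def Antidominant (n : ℕ) (lam : ℕ → ℕ) : Prop :=
  ∀ i j, 1 ≤ i → i ≤ j → j ≤ n → lam i ≤ lam j

/-- Appropriate filling: non-attacking with `T(σ) = 0`. -/
def Appropriate (n : ℕ) (lam : ℕ → ℕ) (σ : ℕ × ℕ → ℕ) : Prop :=
  IsFilling n lam σ ∧ NonAttacking n lam σ ∧ Tstat n lam σ = 0

/-- The operation `π` on compositions: `π(λ) = (λ_n + 1, λ_1, …, λ_{n-1})`. -/
def piComp (n : ℕ) (lam : ℕ → ℕ) : ℕ → ℕ :=
  fun i => if i = 1 then lam n + 1 else lam (i - 1)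

/-- The operation `π` on boxes. -/
def piBox (n : ℕ) (u : ℕ × ℕ) : ℕ × ℕ :=
  if u.1 < n then (u.1 + 1, u.2) else (1, u.2 + 1)

/-- Extension by zero of a function defined on the diagram. -/
def ext (n : ℕ) (lam : ℕ → ℕ) (f : {u // u ∈ dgF n lam} → ℕ) : ℕ × ℕ → ℕ :=
  fun u => if h : u ∈ dgF n lam then f ⟨u, h⟩ else 0

/-- `qstat(σ) = Σ (l(u) + 1)` over boxes `u` with `σ̂(u) < σ̂(d(u))`. -/
def qstat (n : ℕ) (lam : ℕ → ℕ) (σ : ℕ × ℕ → ℕ) : ℕ :=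
  ∑ u ∈ (dgF n lam).filter fun u => aug σ u < aug σ (dbox u), (lam u.1 - u.2 + 1)

end CO

namespace CO

/-- The statistic `asc(τ) = Σ (l(u) + 1)` over boxes `u = (i, j)` with `j ≥ 2` and
`τ(u) < τ(d(u))`. -/
def ascStat (n : ℕ) (mu : ℕ → ℕ) (τ : ℕ × ℕ → ℕ) : ℕ :=
  ∑ u ∈ (dgF n mu).filter fun u => 2 ≤ u.2 ∧ τ u < τ (dbox u), (mu u.1 - u.2 + 1)

/-- The greedy rule (iii): for boxes in rows `≥ 2`, with `S = τ(arm(u)) ∪ {τ(u)}`,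
`τ(u)` is the minimum of `{x ∈ S : x ≥ τ(d(u))}` if nonempty, and `min S` otherwise. -/
def GreedyRule (n : ℕ) (mu : ℕ → ℕ) (τ : ℕ × ℕ → ℕ) : Prop :=
  ∀ u ∈ dgF n mu, 2 ≤ u.2 →
    (({x ∈ τ '' ↑(armF n mu u) ∪ {τ u} | τ (dbox u) ≤ x}.Nonempty →
        τ u = sInf {x ∈ τ '' ↑(armF n mu u) ∪ {τ u} | τ (dbox u) ≤ x}) ∧
      (¬ {x ∈ τ '' ↑(armF n mu u) ∪ {τ u} | τ (dbox u) ≤ x}.Nonempty →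
        τ u = sInf (τ '' ↑(armF n mu u) ∪ {τ u})))

/-- Conditions (i)–(iv) on the fillings `τ` counted by `c_a^μ(k)`. -/
def CCond (n : ℕ) (mu : ℕ → ℕ) (a : ℕ → ℕ) (k : ℕ → ℕ) (τ : ℕ × ℕ → ℕ) : Prop :=
  (∀ u ∈ dgF n mu, 1 ≤ τ u ∧ τ u ≤ n) ∧
    (∀ j, (j, 1) ∈ dgF n mu → τ (j, 1) = a j) ∧
    (∀ u ∈ dgF n mu, ∀ v ∈ dgF n mu, Attack u v → τ u ≠ τ v) ∧
    GreedyRule n mu τ ∧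
    ∀ i, 1 ≤ i → i ≤ n → ((dgF n mu).filter fun u => τ u = i).card = k i

open Classical in
/-- The coefficient `c_a^μ(k) ∈ ℤ[q]`: the generating function `Σ_τ q^{asc(τ)}`
over fillings satisfying (i)–(iv). -/
noncomputable def cCoef (n : ℕ) (mu : ℕ → ℕ) (a : ℕ → ℕ) (k : ℕ → ℕ) : Polynomial ℤ :=
  ∑ f ∈ (Fintype.piFinset fun _ : {u // u ∈ dgF n mu} => Finset.Icc 1 n).filter
      fun f => CCond n mu a k (ext n mu f),
    Polynomial.X ^ ascStat n mu (ext n mu f)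

end CO

namespace CO

/-- Transport a `Fin n`-tuple to a function on `{1, …, n}` (1-based indexing). -/
def liftFin (n : ℕ) (k : Fin n → ℕ) : ℕ → ℕ :=
  fun i => if h : i - 1 < n then k ⟨i - 1, h⟩ else 0

/-- The statistic `stat(w)` on words with letters in `{1, …, n}`: the number of pairs
of positions `i < j` with either `w_i < w_j < n`, or `w_i = n` and `w_j < n`. -/
def wstat (n m : ℕ) (w : Fin m → ℕ) : ℕ :=
  ((Finset.univ ×ˢ Finset.univ : Finset (Fin m × Fin m)).filter fun p =>
    p.1 < p.2 ∧ ((w p.1 < w p.2 ∧ w p.2 < n) ∨ (w p.1 = n ∧ w p.2 < n))).card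

open Classical in
/-- The `q`-multinomial coefficient `binom_q(m; l)`, as the generating function of
`stat` over words of length `m` with letters in `{1, …, n}` and content `l`. -/
noncomputable def qMultinomial (n m : ℕ) (l : ℕ → ℕ) : Polynomial ℤ :=
  ∑ w ∈ (Fintype.piFinset fun _ : Fin m => Finset.Icc 1 n).filter
      fun w => ∀ t ∈ Finset.Icc 1 n, (Finset.univ.filter fun i => w i = t).card = l t,
    Polynomial.X ^ wstat n m w

end CO

namespace CO

/-- The bottom-row tuple defining `c^μ_{ã|b}` (for `s = n - 1`): entry `b` at
position `n`, and the elements of `{1, …, n} ∖ {ã, b}` in decreasing order at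
positions `2, …, n - 1`. -/
def aTuple (n atil b : ℕ) : ℕ → ℕ :=
  fun j => if j = n then b
    else ((((Finset.Icc 1 n).erase atil).erase b).sort (· ≤ ·)).getD (n - 1 - j) 0

/-- The coefficient `c^μ_{ã|b}(k)`. -/
noncomputable def cBar (n : ℕ) (mu : ℕ → ℕ) (atil b : ℕ) (k : ℕ → ℕ) : Polynomial ℤ :=
  cCoef n mu (aTuple n atil b) k

end CO

namespace CO
open Polynomial

/-- The `q`-integer. -/
noncomputable def qi (m : ℕ) : ℤ[X] := ∑ i ∈ range m, X ^ i
/-- The `q`-factorial. -/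
noncomputable def qfac (m : ℕ) : ℤ[X] := ∏ i ∈ range m, qi (i + 1)

lemma qi_mul (m : ℕ) : qi m * (X - 1) = X ^ m - 1 := geom_sum_mul _ _

lemma X_sub_one_ne : (X - 1 : ℤ[X]) ≠ 0 := by
  have := Polynomial.X_sub_C_ne_zero (1 : ℤ)
  simpa using this

lemma qi_succ_ne (m : ℕ) : qi (m + 1) ≠ 0 := by
  intro h
  have := congrArg (Polynomial.eval 1) h
  simp [qi, Polynomial.eval_finsetSum] at this
  omega

lemma qfac_ne (m : ℕ) : qfac m ≠ 0 := by
  rw [qfac, Finset.prod_ne_zero_iff]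
  exact fun i _ => qi_succ_ne i

lemma qfac_succ (m : ℕ) : qfac (m + 1) = qfac m * qi (m + 1) := by
  rw [qfac, Finset.prod_range_succ, ← qfac]

@[simp] lemma qfac_zero : qfac 0 = 1 := by simp [qfac]
@[simp] lemma qi_zero : qi 0 = 0 := by simp [qi]

/-- sum of letters strictly greater. -/
def gtS (n : ℕ) (l : ℕ → ℕ) (a : ℕ) : ℕ := ∑ t ∈ Icc (a + 1) n, l t
/-- sum of letters strictly smaller. -/
def ltS (l : ℕ → ℕ) (b : ℕ) : ℕ := ∑ t ∈ Ico 1 b, l t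

lemma tele (g : ℕ → ℤ[X]) (Q : ℤ[X]) (n a : ℕ) (ha : a ≤ n) :
    ∑ c ∈ Icc 1 n, (if a < c then Q else 1) * (g (c - 1) - g c) =
      (g 0 - g a) + Q * (g a - g n) := by
  induction n, ha using Nat.le_induction with
  | base =>
    have : ∀ m ≤ a, ∑ c ∈ Icc 1 m, (if a < c then Q else 1) * (g (c - 1) - g c) = g 0 - g m := by
      intro m hm
      induction m with
      | zero => simp
      | succ m ih =>
        rw [Finset.sum_Icc_succ_top (by omega), ih (by omega), if_neg (by omega)]
        simp
    rw [this a le_rfl]; ring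
  | succ n hn ih =>
    rw [Finset.sum_Icc_succ_top (by omega), ih, if_pos (by omega)]
    simp; ring

lemma gtS_pred (n : ℕ) (l : ℕ → ℕ) (c : ℕ) (h1 : 1 ≤ c) (h2 : c ≤ n) :
    gtS n l (c - 1) = l c + gtS n l c := by
  unfold gtS
  rw [Nat.sub_add_cancel h1, ← Finset.insert_Icc_add_one_left_eq_Icc h2, Finset.sum_insert (by simp)]

lemma ltS_succ (l : ℕ → ℕ) (c : ℕ) (h1 : 1 ≤ c) :
    ltS l (c + 1) = ltS l c + l c := by
  unfold ltS
  rw [Finset.sum_Ico_succ_top h1]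

lemma telA (n : ℕ) (l : ℕ → ℕ) (M : ℕ) (hM : ∑ t ∈ Icc 1 n, l t = M) (a : ℕ) (ha : a ≤ n) :
    ∑ c ∈ Icc 1 n, X ^ ((if a < c then M else 0) + gtS n l c) * qi (l c)
      = X ^ (gtS n l a) * qi M := by
  apply mul_right_cancel₀ X_sub_one_ne
  rw [Finset.sum_mul, mul_assoc, qi_mul]
  have h := tele (fun c => X ^ (gtS n l c)) (X ^ M) n a ha
  have h0 : gtS n l 0 = M := by rw [← hM]; rfl
  have hn : gtS n l n = 0 := by simp [gtS]
  simp only [h0, hn] at h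
  have h2 : ∑ c ∈ Icc 1 n, X ^ ((if a < c then M else 0) + gtS n l c) * qi (l c) * (X - 1) =
      ∑ c ∈ Icc 1 n, (if a < c then X ^ M else 1) * ((X : ℤ[X]) ^ (gtS n l (c-1)) - X ^ (gtS n l c)) := by
    apply Finset.sum_congr rfl
    intro c hc
    rw [Finset.mem_Icc] at hc
    rw [mul_assoc, qi_mul, gtS_pred n l c hc.1 hc.2]
    split_ifs <;> ring
  rw [h2, h]; ring

lemma telB (n : ℕ) (l : ℕ → ℕ) (M : ℕ) (hM : ∑ t ∈ Icc 1 n, l t = M) (b : ℕ) (hb1 : 1 ≤ b)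
    (hb : b ≤ n) :
    ∑ c ∈ Icc 1 n, X ^ ((if c < b then M else 0) + ltS l c) * qi (l c)
      = X ^ (ltS l b) * qi M := by
  apply mul_right_cancel₀ X_sub_one_ne
  rw [Finset.sum_mul, mul_assoc, qi_mul]
  have h := tele (fun c => - X ^ (M + ltS l (c+1)) ) 0 n (b-1) (by omega)
  have h' := tele (fun c => - X ^ (ltS l (c+1)) ) 1 n (b-1) (by omega)
  have h'' := tele (fun c => - X ^ (ltS l (c+1)) ) 0 n (b-1) (by omega)
  have h0 : ltS l 1 = 0 := by simp [ltS]
  have hn : ltS l (n+1) = M := by rw [← hM]; rfl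
  have hbb : b - 1 + 1 = b := by omega
  simp only [h0, hn, zero_add, hbb] at h h' h''
  have h2 : ∑ c ∈ Icc 1 n, X ^ ((if c < b then M else 0) + ltS l c) * qi (l c) * (X - 1) =
      ∑ c ∈ Icc 1 n, ((if b - 1 < c then 0 else 1) * (- (X : ℤ[X]) ^ (M + ltS l (c-1+1)) - - X ^ (M + ltS l (c+1)))
       + (if b - 1 < c then 1 else 1) * (- (X : ℤ[X]) ^ (ltS l (c-1+1)) - - X ^ (ltS l (c+1)))
       - (if b - 1 < c then 0 else 1) * (- (X : ℤ[X]) ^ (ltS l (c-1+1)) - - X ^ (ltS l (c+1)))) := by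
    apply Finset.sum_congr rfl
    intro c hc
    rw [Finset.mem_Icc] at hc
    have hcc : c - 1 + 1 = c := by omega
    rw [mul_assoc, qi_mul, hcc, ltS_succ l c hc.1]
    by_cases hcb : c < b
    · rw [if_pos hcb, if_neg (by omega), if_neg (by omega)]; ring
    · rw [if_neg hcb, if_pos (by omega), if_pos (by omega)]; ring
  rw [h2, Finset.sum_sub_distrib, Finset.sum_add_distrib, h, h', h'']; ring

/-- decrement one letter -/
def dec (l : ℕ → ℕ) (c : ℕ) : ℕ → ℕ := Function.update l c (l c - 1)

open Classical in
/-- words with given content -/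
noncomputable def wordsF (n m : ℕ) (l : ℕ → ℕ) : Finset (Fin m → ℕ) :=
  (Fintype.piFinset fun _ : Fin m => Finset.Icc 1 n).filter
      fun w => ∀ t ∈ Finset.Icc 1 n, (Finset.univ.filter fun i => w i = t).card = l t

lemma mem_wordsF {n m : ℕ} {l : ℕ → ℕ} {w : Fin m → ℕ} : w ∈ wordsF n m l ↔
    (∀ i, w i ∈ Icc 1 n) ∧ ∀ t ∈ Icc 1 n, #{i | w i = t} = l t := by
  unfold wordsF
  simp only [Finset.mem_filter, Fintype.mem_piFinset]

lemma qM_def (n m : ℕ) (l : ℕ → ℕ) :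
    qMultinomial n m l = ∑ w ∈ wordsF n m l, X ^ wstat n m w := rfl

lemma qM_congr (n m : ℕ) (l l' : ℕ → ℕ) (h : ∀ t ∈ Icc 1 n, l t = l' t) :
    qMultinomial n m l = qMultinomial n m l' := by
  simp only [qM_def]
  apply Finset.sum_congr _ (fun _ _ => rfl)
  ext w
  simp only [mem_wordsF]
  exact and_congr Iff.rfl (forall₂_congr fun t ht => by rw [h t ht])

/-- the comparison relation used in `wstat`. -/
abbrev gtR (n c t : ℕ) : Prop := (c < t ∧ t < n) ∨ (c = n ∧ t < n)

lemma wstat_cons (n m c : ℕ) (w : Fin m → ℕ) :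
    wstat n (m+1) (Fin.cons c w : Fin (m+1) → ℕ) = wstat n m w + #{i | gtR n c (w i)} := by
  unfold wstat
  simp only [Finset.card_filter, Finset.sum_product, Fin.sum_univ_succ]
  simp [Fin.succ_pos, gtR]
  ring

lemma card_gtR (n m c : ℕ) (w : Fin m → ℕ) (l : ℕ → ℕ) (hw : ∀ i, w i ∈ Icc 1 n)
    (hl : ∀ t ∈ Icc 1 n, #{i | w i = t} = l t) :
    #{i | gtR n c (w i)} = ∑ t ∈ Icc 1 n with gtR n c t, l t := by
  rw [Finset.card_eq_sum_card_fiberwise (t := (Icc 1 n).filter (gtR n c)) (f := w)]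
  · apply Finset.sum_congr rfl
    intro t ht
    rw [Finset.mem_filter] at ht
    rw [← hl t ht.1, Finset.filter_filter]
    congr 1
    ext i
    simp only [Finset.mem_filter, Finset.mem_univ, true_and]
    constructor
    · exact fun h => h.2
    · exact fun h => ⟨h ▸ ht.2, h⟩
  · intro i hi
    have := hw i
    simp at hi this ⊢
    exact ⟨this, hi⟩

lemma card_cons (m c : ℕ) (w : Fin m → ℕ) (t : ℕ) :
    #{i | (Fin.cons c w : Fin (m+1) → ℕ) i = t} = #{i | w i = t} + if c = t then 1 else 0 := by
  simp only [Finset.card_filter, Fin.sum_univ_succ]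
  simp; ring

lemma qM_rec (n m : ℕ) (l : ℕ → ℕ) :
    qMultinomial n (m+1) l = ∑ c ∈ Icc 1 n, if 1 ≤ l c then
      X ^ (∑ t ∈ Icc 1 n with gtR n c t, l t) * qMultinomial n m (dec l c) else 0 := by
  simp only [qM_def]
  rw [← Finset.sum_filter]
  simp_rw [Finset.mul_sum]
  rw [Finset.sum_sigma']
  have key : ∀ c w, (c ∈ Icc 1 n ∧ ∀ t ∈ Icc 1 n, #{i | (Fin.cons c w : Fin (m+1) → ℕ) i = t} = l t) ↔
      (c ∈ Icc 1 n ∧ 1 ≤ l c) ∧ ∀ t ∈ Icc 1 n, #{i | w i = t} = dec l c t := by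
    intro c w
    simp only [card_cons]
    constructor
    · rintro ⟨hc, h⟩
      have hcc := h c hc
      rw [if_pos rfl] at hcc
      refine ⟨⟨hc, by omega⟩, fun t ht => ?_⟩
      have := h t ht
      unfold dec
      by_cases htc : t = c
      · subst htc; simp; omega
      · rw [Function.update_of_ne htc, ← this, if_neg (Ne.symm htc)]; rfl
    · rintro ⟨⟨hc, hl⟩, h⟩
      refine ⟨hc, fun t ht => ?_⟩
      have := h t ht
      unfold dec at this
      by_cases htc : t = c
      · subst htc; simp at this ⊢; omega
      · rw [Function.update_of_ne htc] at this; rw [← this, if_neg (Ne.symm htc)]; rfl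
  refine Finset.sum_bij' (fun w _ => ⟨w 0, Fin.tail w⟩) (fun p _ => Fin.cons p.1 p.2) ?_ ?_ ?_ ?_ ?_
  · intro w hw
    obtain ⟨h1, h2⟩ := mem_wordsF.1 hw
    have := (key (w 0) (Fin.tail w)).1 ⟨h1 0, by simpa using h2⟩
    rw [Finset.mem_sigma, Finset.mem_filter, mem_wordsF]
    exact ⟨this.1, fun i => h1 _, this.2⟩
  · intro p hp
    rw [Finset.mem_sigma, Finset.mem_filter, mem_wordsF] at hp
    have := (key p.1 p.2).2 ⟨hp.1, hp.2.2⟩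
    rw [mem_wordsF]
    refine ⟨fun i => ?_, this.2⟩
    refine Fin.cases ?_ (fun i => ?_) i
    · simpa using this.1
    · simpa using hp.2.1 i
  · intro w _; simp
  · intro p _; simp
  · intro w hw
    obtain ⟨h1, h2⟩ := mem_wordsF.1 hw
    have := (key (w 0) (Fin.tail w)).1 ⟨h1 0, by simpa using h2⟩
    conv_lhs => rw [← Fin.cons_self_tail w, wstat_cons]
    rw [card_gtR n m (w 0) (Fin.tail w) (dec l (w 0)) (fun i => h1 _) this.2, pow_add, mul_comm]
    congr 2
    apply Finset.sum_congr rfl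
    intro t ht
    rw [Finset.mem_filter] at ht
    unfold dec
    rw [Function.update_of_ne]
    rintro rfl
    rcases ht.2 with h | h <;> omega

lemma dec_sum (n : ℕ) (l : ℕ → ℕ) (c : ℕ) (hc : c ∈ Icc 1 n) (h : 1 ≤ l c) :
    ∑ t ∈ Icc 1 n, dec l c t + 1 = ∑ t ∈ Icc 1 n, l t := by
  unfold dec
  rw [Finset.sum_update_of_mem hc, ← Finset.add_sum_erase _ _ hc, Finset.sdiff_singleton_eq_erase]
  omega

lemma dec_prod (n : ℕ) (l : ℕ → ℕ) (c : ℕ) (hc : c ∈ Icc 1 n) (h : 1 ≤ l c) :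
    (∏ t ∈ Icc 1 n, qfac (dec l c t)) * qi (l c) = ∏ t ∈ Icc 1 n, qfac (l t) := by
  rw [← Finset.mul_prod_erase _ _ hc, ← Finset.mul_prod_erase _ (fun t => qfac (l t)) hc]
  have : ∏ t ∈ (Icc 1 n).erase c, qfac (dec l c t) = ∏ t ∈ (Icc 1 n).erase c, qfac (l t) := by
    apply Finset.prod_congr rfl
    intro t ht
    rw [dec, Function.update_of_ne (Finset.ne_of_mem_erase ht)]
  rw [this]
  obtain ⟨r, hr⟩ : ∃ r, l c = r + 1 := ⟨l c - 1, by omega⟩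
  simp only [dec, Function.update_self, hr, qfac_succ]
  simp; ring

lemma gtR_sum (n : ℕ) (hn : 1 ≤ n) (l : ℕ → ℕ) (M : ℕ) (hM : ∑ t ∈ Icc 1 n, l t = M) (c : ℕ) (hc : c ∈ Icc 1 n) :
    l n + ∑ t ∈ Icc 1 n with gtR n c t, l t = (if n - 1 < c then M else 0) + gtS n l c := by
  rw [Finset.mem_Icc] at hc
  have hnn : n ∈ Icc 1 n := by simp; omega
  by_cases h : n - 1 < c
  · have hcn : c = n := by omega
    subst hcn
    rw [if_pos h, ← hM, ← Finset.add_sum_erase _ _ hnn]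
    simp only [gtS, Finset.Icc_eq_empty_of_lt (Nat.lt_succ_self c), Finset.sum_empty, add_zero]
    congr 1
    apply Finset.sum_congr _ (fun _ _ => rfl)
    ext t; simp only [Finset.mem_filter, Finset.mem_erase, Finset.mem_Icc]; omega
  · rw [if_neg h, zero_add, gtS, ← Finset.add_sum_erase (Icc (c+1) n) _ (by simp; omega : n ∈ Icc (c+1) n)]
    congr 1
    apply Finset.sum_congr _ (fun _ _ => rfl)
    ext t; simp only [Finset.mem_filter, Finset.mem_erase, Finset.mem_Icc]; omega

lemma qM_qfac (n : ℕ) (hn : 1 ≤ n) (m : ℕ) : ∀ (l : ℕ → ℕ) (_ : ∑ t ∈ Icc 1 n, l t = m),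
    qMultinomial n m l * ∏ t ∈ Icc 1 n, qfac (l t) = qfac m := by
  induction m with
  | zero =>
    intro l hl
    rw [Finset.sum_eq_zero_iff] at hl
    rw [Finset.prod_eq_one (fun t ht => by rw [hl t ht]; simp)]
    have : ∀ t ∈ Icc 1 n, (0:ℕ) = l t := fun t ht => (hl t ht).symm
    simp only [qM_def]
    have hu : wordsF n 0 l = univ := by
      ext w
      simp only [mem_wordsF, Finset.mem_univ, iff_true]
      exact ⟨fun i => i.elim0, fun t ht => by simpa using this t ht⟩
    rw [hu]
    simp [wstat]
  | succ m ih =>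
    intro l hl
    have hne : (X : ℤ[X]) ^ (l n) ≠ 0 := pow_ne_zero _ Polynomial.X_ne_zero
    apply mul_left_cancel₀ hne
    rw [qM_rec, Finset.sum_mul, Finset.mul_sum, qfac_succ]
    have hT := telA n l (m+1) hl (n-1) (by omega)
    have hg : gtS n l (n-1) = l n := by
      rw [gtS_pred n l n hn le_rfl]; simp [gtS]
    rw [hg] at hT
    rw [mul_left_comm, ← hT, Finset.mul_sum]
    apply Finset.sum_congr rfl
    intro c hc
    rw [← gtR_sum n hn l (m+1) hl c hc]
    split_ifs with h
    · have h1 := ih (dec l c) (by have := dec_sum n l c hc h; omega)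
      rw [← dec_prod n l c hc h, ← h1]
      ring
    · have : l c = 0 := by omega
      simp [this]

lemma prodq_ne (n : ℕ) (l : ℕ → ℕ) : ∏ t ∈ Icc 1 n, qfac (l t) ≠ 0 :=
  Finset.prod_ne_zero_iff.2 fun _ _ => qfac_ne _

/-- general first-letter recursion -/
lemma qM_step (n : ℕ) (hn : 1 ≤ n) (m : ℕ) (l : ℕ → ℕ) (hl : ∑ t ∈ Icc 1 n, l t = m + 1)
    (e : ℕ → ℕ) (E : ℕ) (h : ∑ c ∈ Icc 1 n, X ^ (e c) * qi (l c) = X ^ E * qi (m+1)) :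
    X ^ E * qMultinomial n (m+1) l =
      ∑ c ∈ Icc 1 n, if 1 ≤ l c then X ^ (e c) * qMultinomial n m (dec l c) else 0 := by
  apply mul_right_cancel₀ (prodq_ne n l)
  rw [mul_assoc, qM_qfac n hn _ l hl, qfac_succ, mul_left_comm, ← h, Finset.mul_sum, Finset.sum_mul]
  apply Finset.sum_congr rfl
  intro c hc
  split_ifs with h
  · have h1 := qM_qfac n hn m (dec l c) (by have := dec_sum n l c hc h; omega)
    rw [← dec_prod n l c hc h, ← h1]
    ring
  · have : l c = 0 := by omega
    simp [this]

end CO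

namespace CO
open Polynomial

/-- Gaussian binomial coefficients, with integer lower index. -/
noncomputable def gb : ℕ → ℤ → ℤ[X]
  | 0, k => if k = 0 then 1 else 0
  | n + 1, k => gb n (k - 1) + X ^ k.toNat * gb n k

lemma gb_succ (n : ℕ) (k : ℤ) : gb (n + 1) k = gb n (k - 1) + X ^ k.toNat * gb n k := rfl

lemma gb_neg (n : ℕ) : ∀ k : ℤ, k < 0 → gb n k = 0 := by
  induction n with
  | zero => intro k hk; rw [gb, if_neg (by omega)]
  | succ n ih => intro k hk; rw [gb, ih _ (by omega), ih _ hk]; simp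

lemma gb_gt (n : ℕ) : ∀ k : ℤ, (n : ℤ) < k → gb n k = 0 := by
  induction n with
  | zero => intro k hk; rw [gb, if_neg (by simp at hk; omega)]
  | succ n ih => intro k hk; push_cast at hk; rw [gb, ih _ (by omega), ih _ (by omega)]; simp

lemma gb_pascal2 (n : ℕ) : ∀ k : ℤ,
    gb (n + 1) k = gb n k + X ^ ((n : ℤ) + 1 - k).toNat * gb n (k - 1) := by
  induction n with
  | zero =>
    intro k
    by_cases h0 : k = 0
    · subst h0; simp [gb]
    · by_cases h1 : k = 1
      · subst h1; simp [gb]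
      · have : k - 1 ≠ 0 := by omega
        simp [gb, h0, this]
  | succ n ih =>
    intro k
    rw [gb_succ (n + 1)]
    have h1 := ih k
    have h2 := ih (k - 1)
    have key : X ^ k.toNat * X ^ ((n : ℤ) + 1 - k).toNat * gb n (k - 1) =
        X ^ ((n : ℤ) + 1 + 1 - k).toNat * X ^ (k - 1).toNat * gb n (k - 1) := by
      by_cases h : 1 ≤ k ∧ k ≤ n + 1
      · rw [← pow_add, ← pow_add]; congr 2; omega
      · by_cases h' : k < 1
        · rw [gb_neg n (k - 1) (by omega)]; simp
        · rw [gb_gt n (k - 1) (by omega)]; simp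
    have e : ((n : ℤ) + 1 - (k - 1)).toNat = ((n : ℤ) + 1 + 1 - k).toNat := by congr 1; ring
    push_cast
    rw [e] at h2
    linear_combination key + h2 + X ^ k.toNat * h1 - gb_succ n k -
      X ^ ((n : ℤ) + 1 + 1 - k).toNat * gb_succ n (k - 1)

lemma gb_symm (n : ℕ) : ∀ k : ℤ, gb n k = gb n (n - k) := by
  induction n with
  | zero =>
    intro k
    simp [gb]
  | succ n ih =>
    intro k
    rw [gb_pascal2]
    have e1 : ((n + 1 : ℕ) : ℤ) - k - 1 = n - k := by push_cast; ring
    have e2 : ((n + 1 : ℕ) : ℤ) - k = n - (k - 1) := by push_cast; ring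
    have e3 : (n : ℤ) + 1 - k = n - (k - 1) := by ring
    rw [gb_succ, e1, e2, e3, ← ih k, ← ih (k - 1)]

lemma gb_zero_right (n : ℕ) : gb n 0 = 1 := by
  induction n with
  | zero => simp [gb]
  | succ n ih => rw [gb, ih, gb_neg _ _ (by omega)]; simp

lemma qi_add (i j : ℕ) : qi (i + j) = qi i + X ^ i * qi j := by
  apply mul_right_cancel₀ X_sub_one_ne
  rw [add_mul, mul_assoc, qi_mul, qi_mul, qi_mul]; ring

lemma gb_qfac (s : ℕ) : ∀ i j : ℕ, i + j = s → gb s i * qfac i * qfac j = qfac s := by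
  induction s with
  | zero =>
    intro i j h
    obtain ⟨rfl, rfl⟩ : i = 0 ∧ j = 0 := by omega
    simp [gb]
  | succ s ih =>
    intro i j h
    rcases i with _ | i
    · have : j = s + 1 := by omega
      subst this
      simp [gb_zero_right]
    rcases j with _ | j
    · have : i = s := by omega
      subst this
      rw [gb_symm]; simp [gb_zero_right]
    have h1 := ih i (j + 1) (by omega)
    have h2 := ih (i + 1) j (by omega)
    have hq := qi_add (i + 1) (j + 1)
    rw [show i + 1 + (j + 1) = s + 1 by omega] at hq
    rw [qfac_succ s, hq, gb]
    have e1 : ((i + 1 : ℕ) : ℤ) - 1 = i := by push_cast; ring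
    have e2 : ((i + 1 : ℕ) : ℤ).toNat = i + 1 := by omega
    rw [e1, e2]
    rw [qfac_succ j] at h1 ⊢
    rw [qfac_succ i] at h2 ⊢
    linear_combination qi (i + 1) * h1 + X ^ (i + 1) * qi (j + 1) * h2

lemma vander (P : ℕ) (L : ℕ) : ∀ d : ℤ,
    ∑ u ∈ range (L + 1), X ^ (u * ((u : ℤ) + d).toNat) * gb L u * gb P (u + d) =
      gb (L + P) (L + d) := by
  induction L with
  | zero => intro d; simp [gb]
  | succ L ih =>
    intro d
    simp_rw [gb_pascal2, mul_add, add_mul, Finset.sum_add_distrib]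
    rw [Finset.sum_range_succ, gb_gt L ((L + 1 : ℕ) : ℤ) (by push_cast; omega), ih d]
    rw [Finset.sum_range_succ', gb_neg L (((0 : ℕ) : ℤ) - 1) (by simp)]
    have h : ∑ u ∈ range (L + 1), X ^ ((u + 1) * (((u + 1 : ℕ) : ℤ) + d).toNat) *
        (X ^ ((L : ℤ) + 1 - ((u + 1 : ℕ) : ℤ)).toNat * gb L (((u + 1 : ℕ) : ℤ) - 1)) *
          gb P (((u + 1 : ℕ) : ℤ) + d) =
        X ^ ((L : ℤ) + 1 + d).toNat * gb (L + P) (L + (d + 1)) := by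
      rw [← ih (d + 1), Finset.mul_sum]
      apply Finset.sum_congr rfl
      intro u hu
      rw [Finset.mem_range] at hu
      have e1 : ((u + 1 : ℕ) : ℤ) - 1 = u := by push_cast; ring
      have e2 : ((u + 1 : ℕ) : ℤ) + d = u + (d + 1) := by push_cast; ring
      rw [e1, e2]
      by_cases hn : (u : ℤ) + (d + 1) < 0
      · rw [gb_neg P _ hn]; simp
      · have : X ^ ((u + 1) * ((u : ℤ) + (d + 1)).toNat) * X ^ ((L : ℤ) + 1 - ((u + 1 : ℕ) : ℤ)).toNat
          = (X : ℤ[X]) ^ ((L : ℤ) + 1 + d).toNat * X ^ (u * ((u : ℤ) + (d + 1)).toNat) := by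
          rw [← pow_add, ← pow_add, add_mul, one_mul, add_assoc, add_comm]
          congr 2
          omega
        linear_combination gb L u * gb P (u + (d + 1)) * this
    rw [h]
    have e : L + 1 + P = (L + P) + 1 := by ring
    rw [e, gb]
    have e3 : ((L + 1 : ℕ) : ℤ) + d - 1 = L + d := by push_cast; ring
    have e4 : ((L + 1 : ℕ) : ℤ) + d = L + (d + 1) := by push_cast; ring
    have e5 : (L : ℤ) + 1 + d = L + (d + 1) := by ring
    rw [e3, e4, e5]
    simp

lemma vander2 (L P : ℕ) (d : ℤ) :
    ∑ u ∈ range (L + 1), ∑ v ∈ range (P + 1),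
      (if (v : ℤ) - u = d then X ^ (u * v) * gb L u * gb P v else 0) = gb (L + P) (L + d) := by
  rw [← vander]
  apply Finset.sum_congr rfl
  intro u _
  by_cases h : 0 ≤ (u : ℤ) + d ∧ (u : ℤ) + d ≤ P
  · obtain ⟨w, hw⟩ := Int.eq_ofNat_of_zero_le h.1
    rw [Finset.sum_eq_single w]
    · rw [if_pos (by omega), hw]; simp
    · intro v _ hv; rw [if_neg (by omega)]
    · intro hh; rw [Finset.mem_range] at hh; omega
  · have : gb P (u + d) = 0 := by
      by_cases h1 : (u : ℤ) + d < 0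
      · exact gb_neg _ _ h1
      · exact gb_gt _ _ (by omega)
    rw [this, mul_zero]
    apply Finset.sum_eq_zero
    intro v hv
    rw [Finset.mem_range] at hv
    rw [if_neg (by omega)]

/-- split one letter into two. -/
def mk (i i' : ℕ) (l : ℕ → ℕ) (u : ℕ) : ℕ → ℕ :=
  Function.update (Function.update l i u) i' (l i - u)

lemma mk_l {i i' : ℕ} (h : i ≠ i') (l : ℕ → ℕ) (u : ℕ) : mk i i' l u i = u := by
  rw [mk, Function.update_of_ne h, Function.update_self]
lemma mk_r (i i' : ℕ) (l : ℕ → ℕ) (u : ℕ) : mk i i' l u i' = l i - u := by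
  rw [mk, Function.update_self]
lemma mk_o {i i' t : ℕ} (h : t ≠ i) (h' : t ≠ i') (l : ℕ → ℕ) (u : ℕ) : mk i i' l u t = l t := by
  rw [mk, Function.update_of_ne h', Function.update_of_ne h]

lemma sum3 {s : Finset ℕ} {i i' : ℕ} (hi : i ∈ s) (hi' : i' ∈ s) (h : i ≠ i') (f : ℕ → ℕ) :
    ∑ t ∈ s, f t = f i + f i' + ∑ t ∈ (s.erase i).erase i', f t := by
  rw [← Finset.add_sum_erase s f hi, ← Finset.add_sum_erase (s.erase i) f
    (Finset.mem_erase.2 ⟨h.symm, hi'⟩), add_assoc]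

lemma prod3 {s : Finset ℕ} {i i' : ℕ} (hi : i ∈ s) (hi' : i' ∈ s) (h : i ≠ i') (f : ℕ → ℤ[X]) :
    ∏ t ∈ s, f t = f i * f i' * ∏ t ∈ (s.erase i).erase i', f t := by
  rw [← Finset.mul_prod_erase s f hi, ← Finset.mul_prod_erase (s.erase i) f
    (Finset.mem_erase.2 ⟨h.symm, hi'⟩), mul_assoc]

lemma mk_sum {s : Finset ℕ} {i i' : ℕ} (hi : i ∈ s) (hi' : i' ∈ s) (h : i ≠ i') (l : ℕ → ℕ)
    (hl : l i' = 0) (u : ℕ) (hu : u ≤ l i) : ∑ t ∈ s, mk i i' l u t = ∑ t ∈ s, l t := by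
  rw [sum3 hi hi' h, sum3 hi hi' h, mk_l h, mk_r, hl]
  have : ∑ t ∈ (s.erase i).erase i', mk i i' l u t = ∑ t ∈ (s.erase i).erase i', l t := by
    apply Finset.sum_congr rfl
    intro t ht
    simp only [Finset.mem_erase] at ht
    exact mk_o ht.2.1 ht.1 _ _
  rw [this]; omega

lemma split_sum {s : Finset ℕ} {i i' : ℕ} (hi : i ∈ s) (hi' : i' ∈ s) (h : i ≠ i') (m : ℕ)
    (f : (ℕ → ℕ) → ℤ[X]) :
    ∑ l ∈ piAntidiag s m, f l =
      ∑ l ∈ (piAntidiag s m).filter (fun l => l i' = 0), ∑ u ∈ range (l i + 1), f (mk i i' l u) := by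
  rw [Finset.sum_sigma']
  refine Finset.sum_bij' (fun l _ => ⟨Function.update (Function.update l i (l i + l i')) i' 0, l i⟩)
    (fun p _ => mk i i' p.1 p.2) ?_ ?_ ?_ ?_ ?_
  · intro l hl
    rw [mem_piAntidiag] at hl
    simp only [Finset.mem_sigma, Finset.mem_filter, mem_piAntidiag, Finset.mem_range,
      Function.update_self, Function.update_of_ne h, and_true]
    refine ⟨⟨?_, ?_⟩, by omega⟩
    · rw [← hl.1, sum3 hi hi' h, sum3 hi hi' h, Function.update_self, Function.update_of_ne h,
        Function.update_self, add_zero]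
      congr 1
      apply Finset.sum_congr rfl
      intro t ht
      simp only [Finset.mem_erase] at ht
      rw [Function.update_of_ne ht.1, Function.update_of_ne ht.2.1]
    · intro t ht
      by_cases h1 : t = i'
      · subst h1; exact hi'
      · by_cases h2 : t = i
        · subst h2; exact hi
        · rw [Function.update_of_ne h1, Function.update_of_ne h2] at ht
          exact hl.2 t ht
  · rintro ⟨l, u⟩ hp
    simp only [Finset.mem_sigma, Finset.mem_filter, mem_piAntidiag, Finset.mem_range] at hp ⊢
    refine ⟨?_, ?_⟩
    · rw [mk_sum hi hi' h l hp.1.2 u (by omega)]; exact hp.1.1.1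
    · intro t ht
      by_cases h1 : t = i'
      · subst h1; exact hi'
      · by_cases h2 : t = i
        · subst h2; exact hi
        · rw [mk_o h2 h1] at ht
          exact hp.1.1.2 t ht
  · intro l _
    ext t
    by_cases h1 : t = i'
    · subst h1; simp [mk, h]
    · by_cases h2 : t = i
      · subst h2; simp [mk, h1]
      · simp [mk, h1, h2]
  · rintro ⟨l, u⟩ hp
    simp only [Finset.mem_sigma, Finset.mem_filter, mem_piAntidiag, Finset.mem_range] at hp
    simp only [mk_l h, mk_r]
    congr 1
    ext t
    by_cases h1 : t = i'
    · subst h1; simp [hp.1.2]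
    · by_cases h2 : t = i
      · subst h2; simp [h1]; omega
      · simp [mk, h1, h2]
  · intro l _
    congr 1
    ext t
    by_cases h1 : t = i'
    · subst h1; simp [mk, h]
    · by_cases h2 : t = i
      · subst h2; simp [mk, h1]
      · simp [mk, h1, h2]

lemma qM_mk (n : ℕ) {i i' : ℕ} (hi : i ∈ Icc 1 n) (hi' : i' ∈ Icc 1 n) (h : i ≠ i')
    (m : ℕ) (l : ℕ → ℕ) (hl : ∑ t ∈ Icc 1 n, l t = m) (hl0 : l i' = 0) (u : ℕ) (hu : u ≤ l i) :
    qMultinomial n m (mk i i' l u) = gb (l i) u * qMultinomial n m l := by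
  have hn : 1 ≤ n := by rw [Finset.mem_Icc] at hi; omega
  apply mul_right_cancel₀ (prodq_ne n (mk i i' l u))
  rw [qM_qfac n hn m _ (by rw [mk_sum hi hi' h l hl0 u hu, hl]), prod3 hi hi' h, mk_l h, mk_r]
  have : ∏ t ∈ ((Icc 1 n).erase i).erase i', qfac (mk i i' l u t) =
      ∏ t ∈ ((Icc 1 n).erase i).erase i', qfac (l t) := by
    apply Finset.prod_congr rfl
    intro t ht
    simp only [Finset.mem_erase] at ht
    rw [mk_o ht.2.1 ht.1 _ _]
  rw [this]
  have h1 := qM_qfac n hn m l hl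
  rw [prod3 hi hi' h, hl0, qfac_zero] at h1
  have h2 := gb_qfac (l i) u (l i - u) (by omega)
  rw [← h1, ← h2]
  ring

/-- the basic double sum -/
noncomputable def GS (n m M : ℕ) (D : ℕ → ℤ) (i : ℕ) : ℤ[X] :=
  ∑ l ∈ piAntidiag (Icc 1 n) m, ∑ p ∈ piAntidiag (Icc 1 n) M,
    if (∀ t ∈ Icc 1 n, (p t : ℤ) - l t = D t) then
      X ^ (l i * p i) * qMultinomial n m l * qMultinomial n M p else 0

lemma inner_swap (L P : ℕ) (d d' : ℤ) :
    ∑ u ∈ range (L + 1), ∑ v ∈ range (P + 1),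
      (if (v : ℤ) - u = d ∧ ((P - v : ℕ) : ℤ) - (L - u : ℕ) = d' then
        X ^ (u * v) * gb L u * gb P v else 0) =
    ∑ u ∈ range (L + 1), ∑ v ∈ range (P + 1),
      (if (v : ℤ) - u = d ∧ ((P - v : ℕ) : ℤ) - (L - u : ℕ) = d' then
        X ^ ((L - u) * (P - v)) * gb L u * gb P v else 0) := by
  by_cases h : (P : ℤ) - L = d + d'
  · have hl : ∑ u ∈ range (L + 1), ∑ v ∈ range (P + 1),
      (if (v : ℤ) - u = d ∧ ((P - v : ℕ) : ℤ) - (L - u : ℕ) = d' then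
        X ^ (u * v) * gb L u * gb P v else 0) = gb (L + P) (L + d) := by
      rw [← vander2]
      apply Finset.sum_congr rfl
      intro u hu
      apply Finset.sum_congr rfl
      intro v hv
      rw [Finset.mem_range] at hu hv
      apply if_congr _ rfl rfl
      omega
    rw [hl, gb_symm]
    have e : ((L + P : ℕ) : ℤ) - (L + d) = L + d' := by push_cast; omega
    rw [e, ← vander2, ← Finset.sum_range_reflect]
    apply Finset.sum_congr rfl
    intro u hu
    rw [← Finset.sum_range_reflect]
    apply Finset.sum_congr rfl
    intro v hv
    rw [Finset.mem_range] at hu hv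
    have e1 : L + 1 - 1 - u = L - u := by omega
    have e2 : P + 1 - 1 - v = P - v := by omega
    rw [e1, e2, gb_symm L u, gb_symm P v]
    have e3 : ((L - u : ℕ) : ℤ) = L - u := by omega
    have e4 : ((P - v : ℕ) : ℤ) = P - v := by omega
    rw [← e3, ← e4]
    apply if_congr _ rfl rfl
    omega
  · rw [Finset.sum_eq_zero, Finset.sum_eq_zero]
    all_goals
      intro u hu
      apply Finset.sum_eq_zero
      intro v hv
      rw [Finset.mem_range] at hu hv
      rw [if_neg]
      omega

lemma GS_swap (n m M : ℕ) (D : ℕ → ℤ) {i i' : ℕ} (hi : i ∈ Icc 1 n) (hi' : i' ∈ Icc 1 n) :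
    GS n m M D i = GS n m M D i' := by
  by_cases h : i = i'
  · rw [h]
  unfold GS
  have red : ∀ (e : (ℕ → ℕ) → (ℕ → ℕ) → ℕ),
    ∑ l ∈ piAntidiag (Icc 1 n) m, ∑ p ∈ piAntidiag (Icc 1 n) M,
      (if (∀ t ∈ Icc 1 n, (p t : ℤ) - l t = D t) then
        X ^ (e l p) * qMultinomial n m l * qMultinomial n M p else 0) =
    ∑ l ∈ (piAntidiag (Icc 1 n) m).filter (fun l => l i' = 0),
    ∑ p ∈ (piAntidiag (Icc 1 n) M).filter (fun l => l i' = 0),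
      (if (∀ t ∈ ((Icc 1 n).erase i).erase i', (p t : ℤ) - l t = D t) then
        qMultinomial n m l * qMultinomial n M p else 0) *
      ∑ u ∈ range (l i + 1), ∑ v ∈ range (p i + 1),
      (if (v : ℤ) - u = D i ∧ ((p i - v : ℕ) : ℤ) - (l i - u : ℕ) = D i' then
        X ^ (e (mk i i' l u) (mk i i' p v)) * gb (l i) u * gb (p i) v else 0) := by
    intro e
    rw [split_sum hi hi' h]
    apply Finset.sum_congr rfl
    intro l hl
    simp_rw [split_sum hi hi' h M]
    rw [Finset.sum_comm]
    apply Finset.sum_congr rfl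
    intro p hp
    rw [Finset.mul_sum]
    apply Finset.sum_congr rfl
    intro u hu
    rw [Finset.mul_sum]
    apply Finset.sum_congr rfl
    intro v hv
    simp only [Finset.mem_filter, mem_piAntidiag, Finset.mem_range] at hl hp hu hv
    rw [qM_mk n hi hi' h m l hl.1.1 hl.2 u (by omega), qM_mk n hi hi' h M p hp.1.1 hp.2 v (by omega)]
    have hc : (∀ t ∈ Icc 1 n, ((mk i i' p v t : ℕ) : ℤ) - (mk i i' l u t : ℕ) = D t) ↔
       (∀ t ∈ ((Icc 1 n).erase i).erase i', (p t : ℤ) - l t = D t) ∧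
       ((v : ℤ) - u = D i ∧ ((p i - v : ℕ) : ℤ) - (l i - u : ℕ) = D i') := by
      constructor
      · intro H
        refine ⟨?_, ?_, ?_⟩
        · intro t ht
          simp only [Finset.mem_erase] at ht
          have := H t ht.2.2
          rwa [mk_o ht.2.1 ht.1, mk_o ht.2.1 ht.1] at this
        · have := H i hi
          rwa [mk_l h, mk_l h] at this
        · have := H i' hi'
          rwa [mk_r, mk_r] at this
      · rintro ⟨H1, H2, H3⟩ t ht
        by_cases h1 : t = i'
        · subst h1; rw [mk_r, mk_r]; exact H3
        · by_cases h2 : t = i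
          · subst h2; rw [mk_l h, mk_l h]; exact H2
          · rw [mk_o h2 h1, mk_o h2 h1]
            exact H1 t (by simp only [Finset.mem_erase]; exact ⟨h1, h2, ht⟩)
    rw [if_congr hc rfl rfl, ite_and]
    split_ifs <;> ring
  rw [red (fun l p => l i * p i), red (fun l p => l i' * p i')]
  apply Finset.sum_congr rfl
  intro l _
  apply Finset.sum_congr rfl
  intro p _
  congr 1
  simp only [mk_l h, mk_r]
  exact inner_swap _ _ _ _

end CO

namespace CO
open Polynomial

/-- increment one letter -/
def inc (l : ℕ → ℕ) (c : ℕ) : ℕ → ℕ := Function.update l c (l c + 1)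

lemma inc_apply (l : ℕ → ℕ) (c t : ℕ) : inc l c t = l t + if t = c then 1 else 0 := by
  unfold inc
  by_cases h : t = c
  · subst h; simp
  · simp [h]

lemma inc_dec (l : ℕ → ℕ) (c : ℕ) (h : 1 ≤ l c) : inc (dec l c) c = l := by
  ext t
  by_cases ht : t = c
  · subst ht; simp [inc, dec]; omega
  · simp [inc, dec, ht]

lemma dec_inc (l : ℕ → ℕ) (c : ℕ) : dec (inc l c) c = l := by
  ext t
  by_cases ht : t = c
  · subst ht; simp [inc, dec]
  · simp [inc, dec, ht]

lemma inc_sum (n : ℕ) (l : ℕ → ℕ) (c : ℕ) (hc : c ∈ Icc 1 n) :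
    ∑ t ∈ Icc 1 n, inc l c t = ∑ t ∈ Icc 1 n, l t + 1 := by
  have := dec_sum n (inc l c) c hc (by simp [inc])
  rw [dec_inc] at this
  exact this.symm

lemma reindex (n m : ℕ) (g : ℕ → (ℕ → ℕ) → ℤ[X]) :
    ∑ l ∈ piAntidiag (Icc 1 n) (m + 1), ∑ c ∈ Icc 1 n, (if 1 ≤ l c then g c (dec l c) else 0) =
      ∑ c ∈ Icc 1 n, ∑ l ∈ piAntidiag (Icc 1 n) m, g c l := by
  rw [Finset.sum_comm]
  apply Finset.sum_congr rfl
  intro c hc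
  rw [← Finset.sum_filter]
  refine Finset.sum_bij' (fun l _ => dec l c) (fun l _ => inc l c) ?_ ?_ ?_ ?_ ?_
  · intro l hl
    simp only [Finset.mem_filter, mem_piAntidiag] at hl ⊢
    have := dec_sum n l c hc hl.2
    refine ⟨by have h2 := hl.1.1; change ∑ t ∈ Icc 1 n, dec l c t = m; change ∑ t ∈ Icc 1 n, l t = m + 1 at h2; omega, fun t ht => ?_⟩
    by_cases htc : t = c
    · subst htc; exact hc
    · rw [dec, Function.update_of_ne htc] at ht
      exact hl.1.2 t ht
  · intro l hl
    simp only [Finset.mem_filter, mem_piAntidiag] at hl ⊢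
    refine ⟨⟨by rw [inc_sum n l c hc, hl.1], fun t ht => ?_⟩, by simp [inc]⟩
    by_cases htc : t = c
    · subst htc; exact hc
    · rw [inc, Function.update_of_ne htc] at ht
      exact hl.2 t ht
  · intro l hl
    simp only [Finset.mem_filter] at hl
    exact inc_dec l c hl.2
  · intro l _; exact dec_inc l c
  · intro l _; rfl

/-- The closed formula for general bottom row. -/
noncomputable def RR (n m M a b : ℕ) (D : ℕ → ℤ) : ℤ[X] :=
  ∑ l ∈ piAntidiag (Icc 1 n) m, ∑ p ∈ piAntidiag (Icc 1 n) M,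
    if (∀ t ∈ Icc 1 n, (p t : ℤ) - l t = D t) then
      X ^ (l b * p b + gtS n l a + ltS p b) * qMultinomial n m l * qMultinomial n M p else 0

lemma gt_lt (n : ℕ) (l : ℕ → ℕ) (b : ℕ) (hb : b ≤ n) :
    ltS l (b + 1) + gtS n l b = ∑ t ∈ Icc 1 n, l t := by
  unfold ltS gtS
  exact Finset.sum_Ico_consecutive l (by omega : 1 ≤ b + 1) (by omega : b + 1 ≤ n + 1)

lemma gtS_congr (n : ℕ) (l l' : ℕ → ℕ) (a : ℕ) (h : ∀ t, a < t → l t = l' t) :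
    gtS n l a = gtS n l' a := by
  apply Finset.sum_congr rfl
  intro t ht
  rw [Finset.mem_Icc] at ht
  exact h t (by omega)

lemma ltS_congr (l l' : ℕ → ℕ) (a : ℕ) (h : ∀ t, t < a → l t = l' t) :
    ltS l a = ltS l' a := by
  apply Finset.sum_congr rfl
  intro t ht
  rw [Finset.mem_Ico] at ht
  exact h t (by omega)

/-- the top entry of the next row -/
def bnext (n b c : ℕ) : ℕ := if c = b then (if b = n then 1 else b + 1) else b
/-- the weight of the next row -/
def wnext (n m M a b c : ℕ) : ℕ :=
  if c = b ∧ b = n then m + 1 + M else if a < c then m + 1 else 0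

lemma const_mul_GS (n m M i : ℕ) (D : ℕ → ℤ) (E : ℕ) (e : (ℕ → ℕ) → (ℕ → ℕ) → ℕ)
    (h : ∀ l p : ℕ → ℕ, ∑ t ∈ Icc 1 n, l t = m → ∑ t ∈ Icc 1 n, p t = M →
      (∀ t ∈ Icc 1 n, (p t : ℤ) - l t = D t) → e l p = E + l i * p i) :
    ∑ l ∈ piAntidiag (Icc 1 n) m, ∑ p ∈ piAntidiag (Icc 1 n) M,
    (if (∀ t ∈ Icc 1 n, (p t : ℤ) - l t = D t) then
      X ^ (e l p) * qMultinomial n m l * qMultinomial n M p else 0) = X ^ E * GS n m M D i := by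
  unfold GS
  rw [Finset.mul_sum]
  apply Finset.sum_congr rfl
  intro l hl
  rw [Finset.mul_sum]
  apply Finset.sum_congr rfl
  intro p hp
  rw [mem_piAntidiag] at hl hp
  split_ifs with hc
  · rw [h l p hl.1 hp.1 hc]; ring
  · simp

lemma sum_lt_D (n : ℕ) (l p : ℕ → ℕ) (D : ℕ → ℤ) (b : ℕ) (hb : b ≤ n)
    (h : ∀ t ∈ Icc 1 n, (p t : ℤ) - l t = D t) :
    (ltS p (b + 1) : ℤ) = ltS l (b + 1) + ∑ t ∈ Ico 1 (b + 1), D t := by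
  unfold ltS
  push_cast
  rw [← Finset.sum_add_distrib]
  apply Finset.sum_congr rfl
  intro t ht
  rw [Finset.mem_Ico] at ht
  have := h t (by rw [Finset.mem_Icc]; omega)
  omega

lemma RR_step (n m M a b : ℕ) (D : ℕ → ℤ) (ha1 : 1 ≤ a) (ha : a ≤ n) (hb1 : 1 ≤ b) (hb : b ≤ n)
    (hab : a ≠ b) :
    RR n (m + 1) M a b D = ∑ c ∈ Icc 1 n, X ^ (wnext n m M a b c) *
      RR n m M c (bnext n b c) (fun t => D t + if t = c then 1 else 0) := by
  have hn : 1 ≤ n := by omega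
  set g : ℕ → (ℕ → ℕ) → ℤ[X] := fun c l => ∑ p ∈ piAntidiag (Icc 1 n) M,
    if (∀ t ∈ Icc 1 n, (p t : ℤ) - l t = D t + if t = c then 1 else 0) then
      X ^ ((if a < c then m + 1 else 0) + inc l c b * p b + gtS n l c + ltS p b) *
        qMultinomial n m l * qMultinomial n M p else 0 with hg
  have hcond : ∀ (l p : ℕ → ℕ) c, (∀ t ∈ Icc 1 n, (p t : ℤ) - l t = D t + if t = c then 1 else 0) ↔
      (∀ t ∈ Icc 1 n, (p t : ℤ) - inc l c t = D t) := by
    intro l p c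
    apply forall₂_congr
    intro t _
    rw [inc_apply]
    split_ifs <;> push_cast <;> omega
  have hright : ∀ c ∈ Icc 1 n, X ^ (wnext n m M a b c) *
      RR n m M c (bnext n b c) (fun t => D t + if t = c then 1 else 0) =
      ∑ l ∈ piAntidiag (Icc 1 n) m, g c l := by
    intro c hc
    by_cases hcb : c = b
    · subst hcb
      by_cases hbn : c = n
      · subst hbn
        have h1 : RR c m M c (bnext c c c) (fun t => D t + if t = c then 1 else 0) =
            X ^ 0 * GS c m M (fun t => D t + if t = c then 1 else 0) 1 := by
          unfold RR
          apply const_mul_GS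
          intro l p _ _ _
          simp [bnext, gtS, ltS]
        have h2 : ∑ l ∈ piAntidiag (Icc 1 c) m, g c l =
            X ^ (m + 1 + M) * GS c m M (fun t => D t + if t = c then 1 else 0) c := by
          simp only [hg]
          apply const_mul_GS
          intro l p hl hp hD
          have e1 := gt_lt c p c le_rfl
          rw [ltS_succ p c hb1, hp] at e1
          have e2 : ∀ f, gtS c f c = 0 := by simp [gtS]
          rw [e2] at e1 ⊢
          rw [if_pos (by omega), inc_apply, if_pos rfl, add_mul, one_mul]
          omega
        rw [h1, h2, GS_swap c m M _ hc (by simp; omega : 1 ∈ Icc 1 c)]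
        simp [wnext]
      · set E : ℕ := (∑ t ∈ Ico 1 (c + 1), (D t + if t = c then 1 else 0) + m).toNat with hE
        have hexp : ∀ l p : ℕ → ℕ, ∑ t ∈ Icc 1 n, l t = m →
            (∀ t ∈ Icc 1 n, (p t : ℤ) - l t = D t + if t = c then 1 else 0) →
            gtS n l c + ltS p (c + 1) = E := by
          intro l p hl hD
          have h1 := sum_lt_D n l p _ c hb hD
          have h2 := gt_lt n l c hb
          rw [hl] at h2
          omega
        have h1 : RR n m M c (bnext n c c) (fun t => D t + if t = c then 1 else 0) =
            X ^ E * GS n m M (fun t => D t + if t = c then 1 else 0) (c + 1) := by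
          unfold RR
          apply const_mul_GS
          intro l p hl _ hD
          have := hexp l p hl hD
          simp only [bnext, if_true, if_neg hbn]
          omega
        have h2 : ∑ l ∈ piAntidiag (Icc 1 n) m, g c l =
            X ^ ((if a < c then m + 1 else 0) + E) *
              GS n m M (fun t => D t + if t = c then 1 else 0) c := by
          simp only [hg]
          apply const_mul_GS
          intro l p hl hp hD
          have := hexp l p hl hD
          rw [ltS_succ p c hb1] at this
          rw [inc_apply, if_pos rfl, add_mul, one_mul]
          omega
        rw [h1, h2, GS_swap n m M _ hc (by simp; omega : c + 1 ∈ Icc 1 n), pow_add, mul_assoc]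
        simp [wnext, hbn]
    · unfold RR
      rw [Finset.mul_sum]
      apply Finset.sum_congr rfl
      intro l _
      simp only [hg]
      rw [Finset.mul_sum]
      apply Finset.sum_congr rfl
      intro p _
      rw [mul_ite, mul_zero]
      apply if_congr Iff.rfl _ rfl
      have e : wnext n m M a b c = if a < c then m + 1 else 0 := by simp [wnext, hcb]
      rw [e, bnext, if_neg hcb, inc_apply, if_neg (Ne.symm hcb)]
      simp only [add_zero, pow_add]
      ring
  rw [Finset.sum_congr rfl hright, ← reindex]
  unfold RR
  apply Finset.sum_congr rfl
  intro l hl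
  rw [mem_piAntidiag] at hl
  have hT := qM_step n hn m l hl.1 _ _ (telA n l (m + 1) hl.1 a ha)
  have : ∀ p : ℕ → ℕ, (if (∀ t ∈ Icc 1 n, (p t : ℤ) - l t = D t) then
      X ^ (l b * p b + gtS n l a + ltS p b) * qMultinomial n (m + 1) l * qMultinomial n M p else 0)
      = ∑ c ∈ Icc 1 n, if 1 ≤ l c then (if (∀ t ∈ Icc 1 n, (p t : ℤ) - l t = D t) then
        X ^ (l b * p b + ltS p b) * (X ^ ((if a < c then m + 1 else 0) + gtS n l c) *
          qMultinomial n m (dec l c)) * qMultinomial n M p else 0) else 0 := by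
    intro p
    split_ifs with h
    · have e : X ^ (l b * p b + gtS n l a + ltS p b) * qMultinomial n (m + 1) l * qMultinomial n M p
        = X ^ (l b * p b + ltS p b) * qMultinomial n M p *
          (X ^ (gtS n l a) * qMultinomial n (m + 1) l) := by ring
      rw [e, hT, Finset.mul_sum]
      apply Finset.sum_congr rfl
      intro c _
      split_ifs <;> ring
    · simp
  rw [Finset.sum_congr rfl (fun p _ => this p), Finset.sum_comm]
  apply Finset.sum_congr rfl
  intro c hc
  by_cases h : 1 ≤ l c
  · simp only [if_pos h, hg]
    apply Finset.sum_congr rfl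
    intro p _
    simp only [hcond, inc_dec l c h]
    have e : gtS n (dec l c) c = gtS n l c := gtS_congr _ _ _ _ fun t ht => by
      rw [dec, Function.update_of_ne (by omega)]
    rw [e]
    by_cases h' : ∀ t ∈ Icc 1 n, (p t : ℤ) - l t = D t
    · rw [if_pos h', if_pos h']; ring
    · rw [if_neg h', if_neg h']
  · simp [h]

/-- the closed formula for the tail -/
noncomputable def TT (n M b : ℕ) (D : ℕ → ℤ) : ℤ[X] :=
  ∑ p ∈ piAntidiag (Icc 1 n) M,
    if (∀ t ∈ Icc 1 n, (p t : ℤ) = D t) then X ^ (ltS p b) * qMultinomial n M p else 0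

lemma qM_zero (n : ℕ) (hn : 1 ≤ n) : qMultinomial n 0 0 = 1 := by
  have := qM_qfac n hn 0 0 (by simp)
  simpa using this

lemma RR_zero (n M a b : ℕ) (hn : 1 ≤ n) (D : ℕ → ℤ) : RR n 0 M a b D = TT n M b D := by
  unfold RR TT
  rw [piAntidiag_zero, Finset.sum_singleton]
  apply Finset.sum_congr rfl
  intro p _
  rw [qM_zero n hn]
  simp [gtS]

lemma TT_zero_pos (n b : ℕ) (hn : 1 ≤ n) (D : ℕ → ℤ) (h : ∀ t ∈ Icc 1 n, D t = 0) :
    TT n 0 b D = 1 := by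
  unfold TT
  rw [piAntidiag_zero, Finset.sum_singleton, qM_zero n hn, if_pos]
  · simp [ltS]
  · intro t ht; rw [h t ht]; simp

lemma TT_zero_neg (n b : ℕ) (D : ℕ → ℤ) (h : ¬ ∀ t ∈ Icc 1 n, D t = 0) :
    TT n 0 b D = 0 := by
  unfold TT
  rw [piAntidiag_zero, Finset.sum_singleton, if_neg]
  intro h'
  exact h fun t ht => by rw [← h' t ht]; simp

lemma TT_step (n M b : ℕ) (D : ℕ → ℤ) (hb1 : 1 ≤ b) (hb : b ≤ n) :
    TT n (M + 1) b D = ∑ c ∈ Icc 1 n, X ^ (if c < b then M + 1 else 0) *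
      TT n M c (fun t => D t - if t = c then 1 else 0) := by
  have hn : 1 ≤ n := by omega
  unfold TT
  simp_rw [Finset.mul_sum]
  rw [← reindex]
  apply Finset.sum_congr rfl
  intro l hl
  rw [mem_piAntidiag] at hl
  have hT := qM_step n hn M l hl.1 _ _ (telB n l (M + 1) hl.1 b hb1 hb)
  rw [hT]
  have hc : ∀ c, 1 ≤ l c → ((∀ t ∈ Icc 1 n, (dec l c t : ℤ) = D t - if t = c then 1 else 0) ↔
      ∀ t ∈ Icc 1 n, (l t : ℤ) = D t) := by
    intro c h
    apply forall₂_congr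
    intro t _
    by_cases htc : t = c
    · subst htc; simp [dec]; omega
    · simp [dec, htc]
  have hlt : ∀ c, ltS (dec l c) c = ltS l c := fun c => ltS_congr _ _ _ fun t ht => by
      rw [dec, Function.update_of_ne (by omega)]
  by_cases h' : ∀ t ∈ Icc 1 n, (l t : ℤ) = D t
  · rw [if_pos h']
    apply Finset.sum_congr rfl
    intro c _
    by_cases h : 1 ≤ l c
    · rw [if_pos h, if_pos h, if_pos ((hc c h).2 h'), hlt]; ring
    · rw [if_neg h, if_neg h]
  · rw [if_neg h', Finset.sum_eq_zero]
    intro c _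
    by_cases h : 1 ≤ l c
    · rw [if_pos h, if_neg (fun H => h' ((hc c h).1 H))]; simp
    · rw [if_neg h]

end CO

namespace CO
open Polynomial

theorem mem_dgF {n : ℕ} {lam : ℕ → ℕ} {u : ℕ × ℕ} :
    u ∈ dgF n lam ↔ 1 ≤ u.1 ∧ u.1 ≤ n ∧ 1 ≤ u.2 ∧ u.2 ≤ lam u.1 := by
  obtain ⟨i, r⟩ := u
  simp only [dgF, Finset.mem_biUnion, Finset.mem_image, Finset.mem_Icc, Prod.mk.injEq]
  constructor
  · rintro ⟨a, ⟨h1, h2⟩, b, ⟨h3, h4⟩, rfl, rfl⟩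
    exact ⟨h1, h2, h3, h4⟩
  · rintro ⟨h1, h2, h3, h4⟩
    exact ⟨i, ⟨h1, h2⟩, r, ⟨h3, h4⟩, rfl, rfl⟩

theorem sum_dgF (n : ℕ) (lam : ℕ → ℕ) (F : ℕ × ℕ → ℕ) :
    ∑ u ∈ dgF n lam, F u = ∑ i ∈ Icc 1 n, ∑ r ∈ Icc 1 (lam i), F (i, r) := by
  unfold dgF
  rw [Finset.sum_biUnion]
  · apply Finset.sum_congr rfl
    intro i _
    rw [Finset.sum_image]
    intro x _ y _ h
    exact (Prod.mk.inj h).2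
  · intro i _ j _ hij
    rw [Function.onFun, Finset.disjoint_left]
    intro u hu hv
    simp only [Finset.mem_image] at hu hv
    obtain ⟨x, _, rfl⟩ := hu
    obtain ⟨y, _, h⟩ := hv
    exact hij (Prod.mk.inj h).1.symm

/-- lower every column by one -/
def low (lam : ℕ → ℕ) : ℕ → ℕ := fun i => lam i - 1

/-- shift a filling down by one row -/
def sh (τ : ℕ × ℕ → ℕ) : ℕ × ℕ → ℕ := fun u => τ (u.1, u.2 + 1)

theorem sum_Icc_shift (L : ℕ) (F : ℕ → ℕ) :
    ∑ r ∈ Icc 1 L, F r = (if 1 ≤ L then F 1 else 0) + ∑ r ∈ Icc 1 (L - 1), F (r + 1) := by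
  cases L with
  | zero => simp
  | succ L =>
    simp only [Nat.add_sub_cancel, Nat.le_add_left, if_true]
    rw [← Finset.add_sum_Ioc_eq_sum_Icc (by omega)]
    congr 1
    rw [← Finset.Icc_add_one_left_eq_Ioc]
    rw [← Finset.map_add_right_Icc, Finset.sum_map]
    rfl

theorem sum_dgF_shift (n : ℕ) (lam : ℕ → ℕ) (F : ℕ × ℕ → ℕ) :
    ∑ u ∈ dgF n lam, F u = (∑ i ∈ Icc 1 n, if 1 ≤ lam i then F (i, 1) else 0) +
      ∑ u ∈ dgF n (low lam), F (u.1, u.2 + 1) := by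
  rw [sum_dgF, sum_dgF, ← Finset.sum_add_distrib]
  apply Finset.sum_congr rfl
  intro i _
  rw [sum_Icc_shift]
  rfl

theorem content_shift (n : ℕ) (lam : ℕ → ℕ) (τ : ℕ × ℕ → ℕ) (t : ℕ) :
    ((dgF n lam).filter fun u => τ u = t).card =
      ((Icc 1 n).filter fun i => 1 ≤ lam i ∧ τ (i, 1) = t).card +
      ((dgF n (low lam)).filter fun u => sh τ u = t).card := by
  rw [Finset.card_filter, Finset.card_filter, Finset.card_filter, sum_dgF_shift]
  congr 1
  apply Finset.sum_congr rfl
  intro i _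
  by_cases h : 1 ≤ lam i <;> simp [h]

theorem asc_shift (n : ℕ) (lam : ℕ → ℕ) (τ : ℕ × ℕ → ℕ) :
    ascStat n lam τ =
      (∑ i ∈ (Icc 1 n).filter (fun i => 2 ≤ lam i ∧ τ (i, 2) < τ (i, 1)), (lam i - 1)) +
      ascStat n (low lam) (sh τ) := by
  unfold ascStat
  rw [Finset.sum_filter, Finset.sum_filter, Finset.sum_filter, sum_dgF_shift]
  rw [Finset.sum_eq_zero (s := Icc 1 n) (f := fun i => if 1 ≤ lam i then _ else 0), zero_add]
  · rw [sum_dgF_shift n (low lam), sum_dgF_shift n (low lam)]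
    rw [Finset.sum_eq_zero (s := Icc 1 n)
      (f := fun i => if 1 ≤ low lam i then (if 2 ≤ (i, 1).2 ∧ _ then _ else _) else 0), zero_add]
    · congr 1
      · apply Finset.sum_congr rfl
        intro i _
        simp only [low, dbox]
        by_cases h2 : 2 ≤ lam i
        · have e : 1 ≤ lam i - 1 := by omega
          by_cases h3 : τ (i, 2) < τ (i, 1)
          · simp only [e, h2, if_true, le_refl, Nat.reduceAdd, Nat.reduceSub, true_and, h3]
            omega
          · simp [h3]
        · have e : ¬ 1 ≤ lam i - 1 := by omega
          simp only [e, h2, if_false, false_and]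
      · apply Finset.sum_congr rfl
        intro u hu
        rw [mem_dgF] at hu
        simp only [low, dbox, sh] at *
        have e1 : u.2 + 1 + 1 - 1 = u.2 + 1 := by omega
        have e2 : u.2 + 1 - 1 + 1 = u.2 + 1 := by omega
        simp only [e1, e2]
        have e3 : (2 ≤ u.2 + 1 + 1) = True := by simp
        have e4 : (2 ≤ u.2 + 1) = True := by simp; omega
        simp only [e3, e4]
        split_ifs <;> omega
    · intro i _
      simp
  · intro i _
    simp

/-- relational form of the greedy rule -/
def GrP (S : Set ℕ) (x z : ℕ) : Prop :=
  (x ≤ z ∧ ∀ s ∈ S, x ≤ s → z ≤ s) ∨ (z < x ∧ ∀ s ∈ S, s < x ∧ z ≤ s)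

theorem GrP_congr {S S' : Set ℕ} {x x' z z' : ℕ} (h1 : S = S') (h2 : x = x') (h3 : z = z') :
    GrP S x z ↔ GrP S' x' z' := by subst h1 h2 h3; rfl

theorem greedy_iff (S : Set ℕ) (x z : ℕ) (hz : z ∈ S) :
    (({s ∈ S | x ≤ s}.Nonempty → z = sInf {s ∈ S | x ≤ s}) ∧
      (¬ {s ∈ S | x ≤ s}.Nonempty → z = sInf S)) ↔ GrP S x z := by
  constructor
  · rintro ⟨h1, h2⟩
    by_cases hne : {s ∈ S | x ≤ s}.Nonempty
    · left
      have h := h1 hne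
      have hm := Nat.sInf_mem hne
      rw [← h] at hm
      refine ⟨hm.2, fun s hs hxs => ?_⟩
      rw [h]
      exact Nat.sInf_le ⟨hs, hxs⟩
    · right
      have h := h2 hne
      rw [Set.not_nonempty_iff_eq_empty] at hne
      have hlt : ∀ s ∈ S, s < x := by
        intro s hs
        by_contra hc
        have : s ∈ {s ∈ S | x ≤ s} := ⟨hs, by omega⟩
        rw [hne] at this
        exact this
      refine ⟨hlt z hz, fun s hs => ⟨hlt s hs, ?_⟩⟩
      rw [h]
      exact Nat.sInf_le hs
  · rintro (⟨h1, h2⟩ | ⟨h1, h2⟩)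
    · refine ⟨fun hne => ?_, fun hne => absurd ⟨z, hz, h1⟩ hne⟩
      apply le_antisymm
      · exact h2 _ (Nat.sInf_mem hne).1 (Nat.sInf_mem hne).2
      · exact Nat.sInf_le ⟨hz, h1⟩
    · refine ⟨fun ⟨s, hs, hx⟩ => absurd (h2 s hs).1 (by omega), fun _ => ?_⟩
      apply le_antisymm
      · exact (h2 _ (Nat.sInf_mem ⟨z, hz⟩)).2
      · exact Nat.sInf_le hz

/-- concrete form of the conditions -/
def CC (n : ℕ) (lam a k : ℕ → ℕ) (τ : ℕ × ℕ → ℕ) : Prop :=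
  (∀ i r, 1 ≤ i → i ≤ n → 1 ≤ r → r ≤ lam i → 1 ≤ τ (i, r) ∧ τ (i, r) ≤ n) ∧
  (∀ i, 1 ≤ i → i ≤ n → 1 ≤ lam i → τ (i, 1) = a i) ∧
  (∀ i i' r, 1 ≤ i → i < i' → i' ≤ n → 1 ≤ r → r ≤ lam i → r ≤ lam i' →
    τ (i, r) ≠ τ (i', r)) ∧
  (∀ i i' r, 1 ≤ i → i < i' → i' ≤ n → 1 ≤ r → r + 1 ≤ lam i → r ≤ lam i' →
    τ (i, r + 1) ≠ τ (i', r)) ∧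
  (∀ i r, 1 ≤ i → i ≤ n → 1 ≤ r → r + 1 ≤ lam i →
    GrP {x | ∃ i', 1 ≤ i' ∧ i' ≤ i ∧ r + 1 ≤ lam i' ∧ x = τ (i', r + 1)}
      (τ (i, r)) (τ (i, r + 1))) ∧
  ∀ t, 1 ≤ t → t ≤ n → ((dgF n lam).filter fun u => τ u = t).card = k t

theorem armset (n : ℕ) (lam : ℕ → ℕ) (hl : Antidominant n lam) (τ : ℕ × ℕ → ℕ) (i r : ℕ)
    (h1 : 1 ≤ i) (h2 : i ≤ n) (h3 : 1 ≤ r) (h4 : r ≤ lam i) :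
    τ '' ↑(armF n lam (i, r)) ∪ {τ (i, r)} =
      {x | ∃ i', 1 ≤ i' ∧ i' ≤ i ∧ r ≤ lam i' ∧ x = τ (i', r)} := by
  ext x
  simp only [armF, Set.mem_union, Set.mem_image, Finset.coe_union, Finset.mem_coe,
    Finset.mem_filter, mem_dgF, augF, Finset.mem_union, Finset.mem_image, Finset.mem_Icc,
    Set.mem_singleton_iff, Set.mem_ofPred_eq]
  constructor
  · rintro (⟨⟨i', r'⟩, h | h, rfl⟩ | rfl)
    · simp only at h
      obtain ⟨⟨g1, g2, g3, g4⟩, g5, rfl, g6⟩ := h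
      exact ⟨i', g1, by omega, g4, rfl⟩
    · simp only at h
      obtain ⟨h, g5, g6, g7⟩ := h
      have hi : i' ≤ n := by
        rcases h with h | ⟨y, hy, he⟩
        · exact h.2.1
        · have := (Prod.mk.inj he).1
          omega
      have := hl i i' h1 (by omega) hi
      omega
    · exact ⟨i, h1, le_refl _, h4, rfl⟩
  · rintro ⟨i', g1, g2, g3, rfl⟩
    by_cases hi : i' = i
    · right; rw [hi]
    · left
      exact ⟨(i', r), Or.inl ⟨⟨g1, by simp; omega, h3, g3⟩, by simp; omega, rfl,
        hl i' i g1 g2 h2⟩, rfl⟩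

theorem CCond_iff (n : ℕ) (lam a k : ℕ → ℕ) (hl : Antidominant n lam) (τ : ℕ × ℕ → ℕ) :
    CCond n lam a k τ ↔ CC n lam a k τ := by
  unfold CCond CC
  refine and_congr ?_ (and_congr ?_ ?_)
  · constructor
    · intro h i r h1 h2 h3 h4
      exact h (i, r) (mem_dgF.2 ⟨h1, h2, h3, h4⟩)
    · rintro h ⟨i, r⟩ hu
      obtain ⟨h1, h2, h3, h4⟩ := mem_dgF.1 hu
      exact h i r h1 h2 h3 h4
  · constructor
    · intro h i h1 h2 h4
      exact h i (mem_dgF.2 ⟨h1, h2, le_refl _, h4⟩)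
    · rintro h i hu
      obtain ⟨h1, h2, h3, h4⟩ := mem_dgF.1 hu
      exact h i h1 h2 h4
  · refine Iff.trans (and_congr ?_ (and_congr ?_ Iff.rfl)) and_assoc
    · constructor
      · intro h
        constructor
        · intro i i' r h1 h2 h3 h4 h5 h6
          apply h _ (mem_dgF.2 ⟨h1, by simp; omega, h4, h5⟩) _
            (mem_dgF.2 ⟨by simp; omega, h3, h4, h6⟩)
          refine ⟨fun e => ?_, Or.inl rfl⟩
          have := (Prod.mk.inj e).1
          omega
        · intro i i' r h1 h2 h3 h4 h5 h6
          apply h _ (mem_dgF.2 ⟨h1, by simp; omega, by simp, h5⟩) _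
            (mem_dgF.2 ⟨by simp; omega, h3, h4, h6⟩)
          refine ⟨fun e => ?_, Or.inr (Or.inl ⟨rfl, h2⟩)⟩
          have := (Prod.mk.inj e).1
          omega
      · rintro ⟨hA, hB⟩ ⟨i, r⟩ hu ⟨i', r'⟩ hv hat
        obtain ⟨h1, h2, h3, h4⟩ := mem_dgF.1 hu
        obtain ⟨g1, g2, g3, g4⟩ := mem_dgF.1 hv
        obtain ⟨hne, hat⟩ := hat
        simp only at *
        rcases hat with rfl | ⟨rfl, hlt⟩ | ⟨rfl, hlt⟩
        · have hii : i ≠ i' := fun e => hne (by rw [e])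
          rcases lt_or_gt_of_ne hii with hlt | hlt
          · exact hA i i' r h1 hlt g2 h3 h4 g4
          · exact (hA i' i r g1 hlt h2 h3 g4 h4).symm
        · exact hB i i' r' h1 hlt g2 g3 h4 g4
        · exact (hB i' i r g1 hlt h2 h3 g4 h4).symm
    · unfold GreedyRule
      constructor
      · intro h i r h1 h2 h3 h4
        have := h (i, r + 1) (mem_dgF.2 ⟨h1, h2, by simp, h4⟩) (by simp; omega)
        simp only [dbox, Nat.add_sub_cancel] at this
        rw [armset n lam hl τ i (r + 1) h1 h2 (by omega) h4] at this
        refine (greedy_iff _ _ _ ?_).1 this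
        exact ⟨i, h1, le_refl _, h4, rfl⟩
      · rintro h ⟨i, r⟩ hu h2r
        obtain ⟨h1, h2, h3, h4⟩ := mem_dgF.1 hu
        simp only at h1 h2 h3 h4 h2r
        obtain ⟨r, rfl⟩ : ∃ r', r = r' + 1 := ⟨r - 1, by omega⟩
        have := h i r h1 h2 (by omega) h4
        simp only [dbox, Nat.add_sub_cancel]
        rw [armset n lam hl τ i (r + 1) h1 h2 (by omega) h4]
        refine (greedy_iff _ _ _ ?_).2 this
        exact ⟨i, h1, le_refl _, h4, rfl⟩

/-- admissible second rows `z` above the row `a` -/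
def Two (n : ℕ) (lam a z : ℕ → ℕ) : Prop :=
  (∀ i, 1 ≤ i → i ≤ n → 2 ≤ lam i → 1 ≤ z i ∧ z i ≤ n) ∧
  (∀ i i', 1 ≤ i → i < i' → i' ≤ n → 2 ≤ lam i → 2 ≤ lam i' → z i ≠ z i') ∧
  (∀ i i', 1 ≤ i → i < i' → i' ≤ n → 2 ≤ lam i → 1 ≤ lam i' → z i ≠ a i') ∧
  (∀ i, 1 ≤ i → i ≤ n → 2 ≤ lam i →
    GrP {x | ∃ i', 1 ≤ i' ∧ i' ≤ i ∧ 2 ≤ lam i' ∧ x = z i'} (a i) (z i))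

theorem CC_split (n : ℕ) (lam a K k : ℕ → ℕ) (τ : ℕ × ℕ → ℕ)
    (ha : ∀ i, 1 ≤ i → i ≤ n → 1 ≤ lam i → 1 ≤ a i ∧ a i ≤ n)
    (hai : ∀ i i', 1 ≤ i → i < i' → i' ≤ n → 1 ≤ lam i → 1 ≤ lam i' → a i ≠ a i')
    (hK : ∀ t, 1 ≤ t → t ≤ n →
      K t = ((Icc 1 n).filter fun i => 1 ≤ lam i ∧ a i = t).card + k t) :
    CC n lam a K τ ↔ (∀ i, 1 ≤ i → i ≤ n → 1 ≤ lam i → τ (i, 1) = a i) ∧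
      Two n lam a (fun i => τ (i, 2)) ∧
      CC n (low lam) (fun i => τ (i, 2)) k (sh τ) := by
  have hcont : (∀ i, 1 ≤ i → i ≤ n → 1 ≤ lam i → τ (i, 1) = a i) →
      ∀ t, ((Icc 1 n).filter fun i => 1 ≤ lam i ∧ τ (i, 1) = t).card =
        ((Icc 1 n).filter fun i => 1 ≤ lam i ∧ a i = t).card := by
    intro h t
    congr 1
    apply Finset.filter_congr
    intro i hi
    rw [Finset.mem_Icc] at hi
    constructor
    · rintro ⟨h1, h2⟩; exact ⟨h1, by rw [← h i hi.1 hi.2 h1]; exact h2⟩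
    · rintro ⟨h1, h2⟩; exact ⟨h1, by rw [h i hi.1 hi.2 h1]; exact h2⟩
  constructor
  · rintro ⟨h1, h2, h3, h4, h5, h6⟩
    refine ⟨h2, ⟨?_, ?_, ?_, ?_⟩, ?_, ?_, ?_, ?_, ?_, ?_⟩
    · intro i g1 g2 g3
      exact h1 i 2 g1 g2 (by omega) g3
    · intro i i' g1 g2 g3 g4 g5
      exact h3 i i' 2 g1 g2 g3 (by omega) g4 g5
    · intro i i' g1 g2 g3 g4 g5
      rw [← h2 i' (by omega) g3 g5]
      exact h4 i i' 1 g1 g2 g3 (by omega) g4 g5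
    · intro i g1 g2 g3
      rw [← h2 i (by omega) g2 (by omega)]
      exact h5 i 1 g1 g2 (by omega) g3
    · intro i r g1 g2 g3 g4
      simp only [low] at g4
      exact h1 i (r + 1) g1 g2 (by omega) (by omega)
    · intro i g1 g2 g4
      rfl
    · intro i i' r g1 g2 g3 g4 g5 g6
      simp only [low] at g5 g6
      exact h3 i i' (r + 1) g1 g2 g3 (by omega) (by omega) (by omega)
    · intro i i' r g1 g2 g3 g4 g5 g6
      simp only [low] at g5 g6
      exact h4 i i' (r + 1) g1 g2 g3 (by omega) (by omega) (by omega)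
    · intro i r g1 g2 g3 g4
      simp only [low] at g4
      have := h5 i (r + 1) g1 g2 (by omega) (by omega)
      refine (GrP_congr ?_ rfl rfl).1 this
      ext x
      constructor
      · rintro ⟨i', e1, e2, e3, e4⟩
        exact ⟨i', e1, e2, by simp only [low]; omega, e4⟩
      · rintro ⟨i', e1, e2, e3, e4⟩
        simp only [low] at e3
        exact ⟨i', e1, e2, by omega, e4⟩
    · intro t g1 g2
      have := h6 t g1 g2
      rw [content_shift, hcont h2, hK t g1 g2] at this
      omega
  · rintro ⟨h2, ⟨T1, T2, T3, T4⟩, C1, -, C3, C4, C5, C6⟩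
    refine ⟨?_, h2, ?_, ?_, ?_, ?_⟩
    · intro i r g1 g2 g3 g4
      by_cases hr : r = 1
      · subst hr
        rw [h2 i g1 g2 g4]
        exact ha i g1 g2 g4
      · obtain ⟨r, rfl⟩ : ∃ r', r = r' + 1 := ⟨r - 1, by omega⟩
        exact C1 i r g1 g2 (by omega) (by simp only [low]; omega)
    · intro i i' r g1 g2 g3 g4 g5 g6
      by_cases hr : r = 1
      · subst hr
        rw [h2 i g1 (by omega) (by omega), h2 i' (by omega) (by omega) (by omega)]
        exact hai i i' g1 g2 g3 g5 g6
      · obtain ⟨r, rfl⟩ : ∃ r', r = r' + 1 := ⟨r - 1, by omega⟩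
        exact C3 i i' r g1 g2 g3 (by omega) (by simp only [low]; omega) (by simp only [low]; omega)
    · intro i i' r g1 g2 g3 g4 g5 g6
      by_cases hr : r = 1
      · subst hr
        rw [h2 i' (by omega) (by omega) (by omega)]
        exact T3 i i' g1 g2 g3 g5 g6
      · obtain ⟨r, rfl⟩ : ∃ r', r = r' + 1 := ⟨r - 1, by omega⟩
        exact C4 i i' r g1 g2 g3 (by omega) (by simp only [low]; omega) (by simp only [low]; omega)
    · intro i r g1 g2 g3 g4
      by_cases hr : r = 1
      · subst hr
        rw [h2 i (by omega) (by omega) (by omega)]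
        exact T4 i g1 g2 g4
      · obtain ⟨r, rfl⟩ : ∃ r', r = r' + 1 := ⟨r - 1, by omega⟩
        have := C5 i r g1 g2 (by omega) (by simp only [low]; omega)
        refine (GrP_congr ?_ rfl rfl).1 this
        ext x
        constructor
        · rintro ⟨i', e1, e2, e3, e4⟩
          simp only [low] at e3
          exact ⟨i', e1, e2, by omega, e4⟩
        · rintro ⟨i', e1, e2, e3, e4⟩
          exact ⟨i', e1, e2, by simp only [low]; omega, e4⟩
    · intro t g1 g2
      rw [content_shift, hcont h2, hK t g1 g2, C6 t g1 g2]

end CO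

namespace CO
open Polynomial

theorem CC_mono (n : ℕ) (lam a a' k : ℕ → ℕ) (τ τ' : ℕ × ℕ → ℕ)
    (hτ : ∀ i r, 1 ≤ i → i ≤ n → 1 ≤ r → r ≤ lam i → τ (i, r) = τ' (i, r))
    (ha : ∀ i, 1 ≤ i → i ≤ n → 1 ≤ lam i → a i = a' i) (h : CC n lam a k τ) :
    CC n lam a' k τ' := by
  obtain ⟨h1, h2, h3, h4, h5, h6⟩ := h
  refine ⟨?_, ?_, ?_, ?_, ?_, ?_⟩
  · intro i r g1 g2 g3 g4
    rw [← hτ i r g1 g2 g3 g4]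
    exact h1 i r g1 g2 g3 g4
  · intro i g1 g2 g3
    rw [← hτ i 1 g1 g2 (le_refl _) g3, ← ha i g1 g2 g3]
    exact h2 i g1 g2 g3
  · intro i i' r g1 g2 g3 g4 g5 g6
    rw [← hτ i r g1 (by omega) g4 g5, ← hτ i' r (by omega) g3 g4 g6]
    exact h3 i i' r g1 g2 g3 g4 g5 g6
  · intro i i' r g1 g2 g3 g4 g5 g6
    rw [← hτ i (r + 1) g1 (by omega) (by omega) g5, ← hτ i' r (by omega) g3 g4 g6]
    exact h4 i i' r g1 g2 g3 g4 g5 g6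
  · intro i r g1 g2 g3 g4
    refine (GrP_congr ?_ ?_ ?_).1 (h5 i r g1 g2 g3 g4)
    · ext x
      constructor
      · rintro ⟨i', e1, e2, e3, rfl⟩
        exact ⟨i', e1, e2, e3, hτ i' (r + 1) e1 (by omega) (by omega) e3⟩
      · rintro ⟨i', e1, e2, e3, rfl⟩
        exact ⟨i', e1, e2, e3, (hτ i' (r + 1) e1 (by omega) (by omega) e3).symm⟩
    · exact hτ i r g1 g2 g3 (by omega)
    · exact hτ i (r + 1) g1 g2 (by omega) (by omega)
  · intro t g1 g2
    rw [← h6 t g1 g2]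
    congr 1
    apply Finset.filter_congr
    rintro ⟨i, r⟩ hu
    obtain ⟨e1, e2, e3, e4⟩ := mem_dgF.1 hu
    rw [hτ i r e1 e2 e3 e4]

theorem Two_mono (n : ℕ) (lam a z z' : ℕ → ℕ)
    (hz : ∀ i, 1 ≤ i → i ≤ n → 2 ≤ lam i → z i = z' i) (h : Two n lam a z) :
    Two n lam a z' := by
  obtain ⟨h1, h2, h3, h4⟩ := h
  refine ⟨?_, ?_, ?_, ?_⟩
  · intro i g1 g2 g3
    rw [← hz i g1 g2 g3]; exact h1 i g1 g2 g3
  · intro i i' g1 g2 g3 g4 g5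
    rw [← hz i g1 (by omega) g4, ← hz i' (by omega) g3 g5]
    exact h2 i i' g1 g2 g3 g4 g5
  · intro i i' g1 g2 g3 g4 g5
    rw [← hz i g1 (by omega) g4]
    exact h3 i i' g1 g2 g3 g4 g5
  · intro i g1 g2 g3
    refine (GrP_congr ?_ rfl (hz i g1 g2 g3)).1 (h4 i g1 g2 g3)
    ext x
    constructor
    · rintro ⟨i', e1, e2, e3, rfl⟩
      exact ⟨i', e1, e2, e3, hz i' e1 (by omega) e3⟩
    · rintro ⟨i', e1, e2, e3, rfl⟩
      exact ⟨i', e1, e2, e3, (hz i' e1 (by omega) e3).symm⟩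

theorem asc_congr (n : ℕ) (lam : ℕ → ℕ) (τ τ' : ℕ × ℕ → ℕ)
    (hτ : ∀ i r, 1 ≤ i → i ≤ n → 1 ≤ r → r ≤ lam i → τ (i, r) = τ' (i, r)) :
    ascStat n lam τ = ascStat n lam τ' := by
  unfold ascStat
  apply Finset.sum_congr _ (fun _ _ => rfl)
  apply Finset.filter_congr
  rintro ⟨i, r⟩ hu
  obtain ⟨e1, e2, e3, e4⟩ := mem_dgF.1 hu
  simp only [dbox] at *
  apply and_congr_right
  intro h2
  rw [hτ i r e1 e2 e3 e4, hτ i (r - 1) e1 e2 (by omega) (by omega)]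

theorem ext_apply (n : ℕ) (lam : ℕ → ℕ) (f : {u // u ∈ dgF n lam} → ℕ) (i r : ℕ)
    (h : (i, r) ∈ dgF n lam) : ext n lam f (i, r) = f ⟨(i, r), h⟩ := by
  unfold ext
  rw [dif_pos h]

open Classical in
/-- the finite set of admissible fillings -/
noncomputable def FF (n : ℕ) (lam a k : ℕ → ℕ) : Finset ({u // u ∈ dgF n lam} → ℕ) :=
  (Fintype.piFinset fun _ : {u // u ∈ dgF n lam} => Finset.Icc 1 n).filter
      fun f => CCond n lam a k (ext n lam f)

theorem mem_FF (n : ℕ) (lam a k : ℕ → ℕ) (hl : Antidominant n lam)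
    (f : {u // u ∈ dgF n lam} → ℕ) : f ∈ FF n lam a k ↔ CC n lam a k (ext n lam f) := by
  unfold FF
  simp only [Finset.mem_filter, Fintype.mem_piFinset, Finset.mem_Icc, CCond_iff n lam a k hl]
  constructor
  · exact fun h => h.2
  · intro h
    refine ⟨?_, h⟩
    rintro ⟨⟨i, r⟩, hu⟩
    obtain ⟨e1, e2, e3, e4⟩ := mem_dgF.1 hu
    have := h.1 i r e1 e2 e3 e4
    rwa [ext_apply n lam f i r hu] at this

theorem cCoef_eq (n : ℕ) (lam a k : ℕ → ℕ) :
    cCoef n lam a k = ∑ f ∈ FF n lam a k, X ^ ascStat n lam (ext n lam f) := rfl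

theorem low_anti (n : ℕ) (lam : ℕ → ℕ) (hl : Antidominant n lam) : Antidominant n (low lam) := by
  intro i j h1 h2 h3
  have := hl i j h1 h2 h3
  simp only [low]
  omega

theorem cCoef_congr (n : ℕ) (lam a a' k : ℕ → ℕ) (hl : Antidominant n lam)
    (ha : ∀ i, 1 ≤ i → i ≤ n → 1 ≤ lam i → a i = a' i) :
    cCoef n lam a k = cCoef n lam a' k := by
  rw [cCoef_eq, cCoef_eq]
  apply Finset.sum_congr _ (fun _ _ => rfl)
  ext f
  rw [mem_FF _ _ _ _ hl, mem_FF _ _ _ _ hl]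
  constructor
  · exact CC_mono _ _ _ _ _ _ _ (fun _ _ _ _ _ _ => rfl) ha
  · exact CC_mono _ _ _ _ _ _ _ (fun _ _ _ _ _ _ => rfl) (fun i h1 h2 h3 => (ha i h1 h2 h3).symm)

theorem cCoef_lam_congr (n : ℕ) (lam lam' a k : ℕ → ℕ)
    (h : lam = lam') : cCoef n lam a k = cCoef n lam' a k := by rw [h]

/-- raise a filling by one row above `a` -/
def up (n : ℕ) (lam a : ℕ → ℕ) (f : {u // u ∈ dgF n (low lam)} → ℕ) :
    {u // u ∈ dgF n lam} → ℕ :=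
  fun u => if u.1.2 = 1 then a u.1.1 else ext n (low lam) f (u.1.1, u.1.2 - 1)

theorem up_one (n : ℕ) (lam a : ℕ → ℕ) (f : {u // u ∈ dgF n (low lam)} → ℕ) (i : ℕ)
    (h1 : 1 ≤ i) (h2 : i ≤ n) (h3 : 1 ≤ lam i) : ext n lam (up n lam a f) (i, 1) = a i := by
  rw [ext_apply n lam _ i 1 (mem_dgF.2 ⟨h1, h2, le_refl _, h3⟩)]
  simp [up]

theorem up_succ (n : ℕ) (lam a : ℕ → ℕ) (f : {u // u ∈ dgF n (low lam)} → ℕ) (i r : ℕ)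
    (h1 : 1 ≤ i) (h2 : i ≤ n) (h : 1 ≤ r) (h3 : r ≤ low lam i) :
    ext n lam (up n lam a f) (i, r + 1) = ext n (low lam) f (i, r) := by
  simp only [low] at h3
  rw [ext_apply n lam _ i (r + 1) (mem_dgF.2 ⟨h1, h2, by simp, by simp; omega⟩)]
  simp only [up, Nat.add_sub_cancel]
  rw [if_neg (by omega)]

theorem peel (n : ℕ) (lam a K k : ℕ → ℕ) (hl : Antidominant n lam)
    (ha : ∀ i, 1 ≤ i → i ≤ n → 1 ≤ lam i → 1 ≤ a i ∧ a i ≤ n)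
    (hai : ∀ i i', 1 ≤ i → i < i' → i' ≤ n → 1 ≤ lam i → 1 ≤ lam i' → a i ≠ a i')
    (hK : ∀ t, 1 ≤ t → t ≤ n →
      K t = ((Icc 1 n).filter fun i => 1 ≤ lam i ∧ a i = t).card + k t)
    (I : Finset ℕ) (y : ℕ → ℕ → ℕ)
    (hY : ∀ z, Two n lam a z ↔ ∃ c ∈ I, ∀ i, 1 ≤ i → i ≤ n → 2 ≤ lam i → z i = y c i)
    (hinj : ∀ c ∈ I, ∀ c' ∈ I, (∀ i, 1 ≤ i → i ≤ n → 2 ≤ lam i → y c i = y c' i) → c = c') :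
    cCoef n lam a K = ∑ c ∈ I,
      X ^ (∑ i ∈ (Icc 1 n).filter (fun i => 2 ≤ lam i ∧ y c i < a i), (lam i - 1)) *
        cCoef n (low lam) (y c) k := by
  have hl' := low_anti n lam hl
  have hrow : ∀ (c : ℕ) (f : {u // u ∈ dgF n (low lam)} → ℕ), CC n (low lam) (y c) k (ext n (low lam) f) →
      ∀ i, 1 ≤ i → i ≤ n → 2 ≤ lam i → ext n lam (up n lam a f) (i, 2) = y c i := by
    intro c f hf i h1 h2 h3
    have h4 : 1 ≤ low lam i := by simp only [low]; omega
    rw [up_succ n lam a f i 1 h1 h2 (le_refl _) h4]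
    exact hf.2.1 i h1 h2 h4
  symm
  simp only [cCoef_eq, Finset.mul_sum]
  rw [Finset.sum_sigma']
  apply Finset.sum_bij (fun (x : (_ : ℕ) × ({u // u ∈ dgF n (low lam)} → ℕ)) _ => up n lam a x.2)
  · rintro ⟨c, f⟩ hx
    rw [Finset.mem_sigma] at hx
    obtain ⟨hc, hf⟩ := hx
    simp only at hc hf
    rw [mem_FF _ _ _ _ hl'] at hf
    rw [mem_FF _ _ _ _ hl, CC_split n lam a K k _ ha hai hK]
    refine ⟨fun i h1 h2 h3 => up_one n lam a f i h1 h2 h3, ?_, ?_⟩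
    · rw [hY]
      exact ⟨c, hc, hrow c f hf⟩
    · refine CC_mono _ _ _ _ _ _ _ ?_ ?_ hf
      · intro i r h1 h2 h3 h4
        exact (up_succ n lam a f i r h1 h2 h3 h4).symm
      · intro i h1 h2 h3
        simp only [low] at h3
        exact (hrow c f hf i h1 h2 (by omega)).symm
  · rintro ⟨c, f⟩ hx ⟨c', f'⟩ hx' he
    rw [Finset.mem_sigma] at hx hx'
    obtain ⟨hc, hf⟩ := hx
    obtain ⟨hc', hf'⟩ := hx'
    simp only at hc hf hc' hf' he
    rw [mem_FF _ _ _ _ hl'] at hf hf'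
    have hcc : c = c' := by
      apply hinj c hc c' hc'
      intro i h1 h2 h3
      rw [← hrow c f hf i h1 h2 h3, ← hrow c' f' hf' i h1 h2 h3, he]
    have hff : f = f' := by
      funext ⟨⟨i, r⟩, hu⟩
      obtain ⟨e1, e2, e3, e4⟩ := mem_dgF.1 hu
      rw [← ext_apply n (low lam) f i r hu, ← ext_apply n (low lam) f' i r hu,
        ← up_succ n lam a f i r e1 e2 e3 e4, ← up_succ n lam a f' i r e1 e2 e3 e4, he]
    rw [hcc, hff]
  · intro g hg
    rw [mem_FF _ _ _ _ hl, CC_split n lam a K k _ ha hai hK] at hg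
    obtain ⟨g1, g2, g3⟩ := hg
    rw [hY] at g2
    obtain ⟨c, hc, hy⟩ := g2
    let f : {u // u ∈ dgF n (low lam)} → ℕ := fun u => ext n lam g (u.1.1, u.1.2 + 1)
    have hfe : ∀ i r, 1 ≤ i → i ≤ n → 1 ≤ r → r ≤ low lam i →
        sh (ext n lam g) (i, r) = ext n (low lam) f (i, r) := by
      intro i r h1 h2 h3 h4
      rw [ext_apply n (low lam) f i r (mem_dgF.2 ⟨h1, h2, h3, h4⟩)]
      rfl
    refine ⟨⟨c, f⟩, ?_, ?_⟩
    · rw [Finset.mem_sigma]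
      refine ⟨hc, ?_⟩
      rw [mem_FF _ _ _ _ hl']
      refine CC_mono _ _ _ _ _ _ _ hfe ?_ g3
      intro i h1 h2 h3
      simp only [low] at h3
      exact hy i h1 h2 (by omega)
    · funext ⟨⟨i, r⟩, hu⟩
      obtain ⟨e1, e2, e3, e4⟩ := mem_dgF.1 hu
      simp only at e1 e2 e3 e4
      rw [← ext_apply n lam g i r hu, ← ext_apply n lam (up n lam a f) i r hu]
      by_cases hr : r = 1
      · subst hr
        rw [up_one n lam a f i e1 e2 e4, g1 i e1 e2 e4]
      · obtain ⟨r, rfl⟩ : ∃ r', r = r' + 1 := ⟨r - 1, by omega⟩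
        have h4 : r ≤ low lam i := by simp only [low]; omega
        rw [up_succ n lam a f i r e1 e2 (by omega) h4, ← hfe i r e1 e2 (by omega) h4]
        rfl
  · rintro ⟨c, f⟩ hx
    rw [Finset.mem_sigma] at hx
    obtain ⟨hc, hf⟩ := hx
    simp only at hc hf
    rw [mem_FF _ _ _ _ hl'] at hf
    simp only
    rw [← pow_add, asc_shift n lam]
    congr 2
    · apply Finset.sum_congr _ (fun _ _ => rfl)
      apply Finset.filter_congr
      intro i hi
      rw [Finset.mem_Icc] at hi
      apply and_congr_right
      intro h2
      rw [hrow c f hf i hi.1 hi.2 h2, up_one n lam a f i hi.1 hi.2 (by omega)]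
    · apply asc_congr
      intro i r h1 h2 h3 h4
      exact (up_succ n lam a f i r h1 h2 h3 h4).symm

theorem cCoef_zero (n : ℕ) (lam a K : ℕ → ℕ) (hl : Antidominant n lam) (t : ℕ) (h1 : 1 ≤ t)
    (h2 : t ≤ n) (h : K t < ((Icc 1 n).filter fun i => 1 ≤ lam i ∧ a i = t).card) :
    cCoef n lam a K = 0 := by
  rw [cCoef_eq]
  apply Finset.sum_eq_zero
  intro f hf
  exfalso
  rw [mem_FF _ _ _ _ hl] at hf
  have h6 := hf.2.2.2.2.2 t h1 h2
  rw [content_shift] at h6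
  have : ((Icc 1 n).filter fun i => 1 ≤ lam i ∧ ext n lam f (i, 1) = t).card =
        ((Icc 1 n).filter fun i => 1 ≤ lam i ∧ a i = t).card := by
    congr 1
    apply Finset.filter_congr
    intro i hi
    rw [Finset.mem_Icc] at hi
    apply and_congr_right
    intro h3
    rw [hf.2.1 i hi.1 hi.2 h3]
  omega

theorem cCoef_empty (n : ℕ) (lam a K : ℕ → ℕ) (hl : ∀ i, 1 ≤ i → i ≤ n → lam i = 0) 
    (hK : ∀ t, 1 ≤ t → t ≤ n → K t = 0) : cCoef n lam a K = 1 := by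
  have hd : dgF n lam = ∅ := by
    rw [Finset.eq_empty_iff_forall_notMem]
    intro u hu
    obtain ⟨e1, e2, e3, e4⟩ := mem_dgF.1 hu
    have := hl _ e1 e2
    omega
  have hanti : Antidominant n lam := by
    intro i j h1 h2 h3
    rw [hl i h1 (by omega)]; omega
  have : IsEmpty {u // u ∈ dgF n lam} := by
    rw [hd]; infer_instance
  rw [cCoef_eq]
  have : FF n lam a K = {fun _ => 0} := by
    ext f
    rw [mem_FF _ _ _ _ hanti, Finset.mem_singleton]
    constructor
    · intro _; exact Subsingleton.elim _ _
    · intro _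
      refine ⟨?_, ?_, ?_, ?_, ?_, ?_⟩
      · intro i r h1 h2 h3 h4
        rw [hl i h1 h2] at h4; omega
      · intro i h1 h2 h3
        rw [hl i h1 h2] at h3; omega
      · intro i i' r h1 h2 h3 h4 h5
        rw [hl i h1 (by omega)] at h5; omega
      · intro i i' r h1 h2 h3 h4 h5
        rw [hl i h1 (by omega)] at h5; omega
      · intro i r h1 h2 h3 h4
        rw [hl i h1 h2] at h4; omega
      · intro t h1 h2
        rw [hd, hK t h1 h2]; simp
  rw [this, Finset.sum_singleton]
  have h0 : ∀ τ, ascStat n lam τ = 0 := by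
    intro τ
    unfold ascStat
    rw [hd]
    simp
  rw [h0, pow_zero]

theorem cCoef_empty_zero (n : ℕ) (lam a K : ℕ → ℕ) (hl : ∀ i, 1 ≤ i → i ≤ n → lam i = 0) 
    (hK : ¬ ∀ t, 1 ≤ t → t ≤ n → K t = 0) : cCoef n lam a K = 0 := by
  have hd : dgF n lam = ∅ := by
    rw [Finset.eq_empty_iff_forall_notMem]
    intro u hu
    obtain ⟨e1, e2, e3, e4⟩ := mem_dgF.1 hu
    have := hl _ e1 e2
    omega
  have hanti : Antidominant n lam := by
    intro i j h1 h2 h3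
    rw [hl i h1 (by omega)]; omega
  rw [cCoef_eq]
  apply Finset.sum_eq_zero
  intro f hf
  exfalso
  rw [mem_FF _ _ _ _ hanti] at hf
  apply hK
  intro t h1 h2
  have := hf.2.2.2.2.2 t h1 h2
  rw [hd] at this
  simpa using this.symm

end CO

namespace CO
open Polynomial

theorem GrP_unique {S : Set ℕ} {x z z' : ℕ} (hz : z ∈ S) (hz' : z' ∈ S) (h : GrP S x z)
    (h' : GrP S x z') : z = z' := by
  rcases h with ⟨h1, h2⟩ | ⟨h1, h2⟩ <;> rcases h' with ⟨h3, h4⟩ | ⟨h3, h4⟩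
  · exact le_antisymm (h2 _ hz' h3) (h4 _ hz h1)
  · have := (h4 _ hz).1; omega
  · have := (h2 _ hz').1; omega
  · exact le_antisymm (h2 _ hz').2 (h4 _ hz).2

theorem GrP_exists (S : Finset ℕ) (hS : S.Nonempty) (x : ℕ) : ∃ z ∈ S, GrP (↑S) x z := by
  by_cases h : (S.filter fun s => x ≤ s).Nonempty
  · have hm := Finset.min'_mem _ h
    rw [Finset.mem_filter] at hm
    refine ⟨_, hm.1, Or.inl ⟨hm.2, fun s hs hxs => ?_⟩⟩
    exact Finset.min'_le _ _ (Finset.mem_filter.2 ⟨hs, hxs⟩)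
  · rw [Finset.not_nonempty_iff_eq_empty, Finset.filter_eq_empty_iff] at h
    have hm := Finset.min'_mem _ hS
    refine ⟨_, hm, Or.inr ⟨not_le.1 (h hm), fun s hs => ⟨not_le.1 (h hs), ?_⟩⟩⟩
    exact Finset.min'_le _ _ hs

open Classical in
/-- cyclic successor of `x` in `S` -/
noncomputable def cyc (S : Finset ℕ) (x : ℕ) : ℕ :=
  if h : S.Nonempty then (GrP_exists S h x).choose else 0

theorem cyc_mem (S : Finset ℕ) (hS : S.Nonempty) (x : ℕ) : cyc S x ∈ S := by
  unfold cyc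
  rw [dif_pos hS]
  exact (GrP_exists S hS x).choose_spec.1

theorem cyc_gr (S : Finset ℕ) (hS : S.Nonempty) (x : ℕ) : GrP (↑S) x (cyc S x) := by
  unfold cyc
  rw [dif_pos hS]
  exact (GrP_exists S hS x).choose_spec.2

/-- values of the lower row in columns `1..i` -/
def xs (x : ℕ → ℕ) (i : ℕ) : Finset ℕ := (Icc 1 i).image x
/-- values of the upper row in columns `2..i` -/
def zs (z : ℕ → ℕ) (i : ℕ) : Finset ℕ := (Icc 2 i).image z

theorem xs_succ (x : ℕ → ℕ) (i : ℕ) : xs x (i + 1) = insert (x (i + 1)) (xs x i) := by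
  unfold xs
  rw [← Finset.insert_Icc_right_eq_Icc_add_one (by omega), Finset.image_insert]

theorem zs_succ (z : ℕ → ℕ) (i : ℕ) (hi : 1 ≤ i) :
    zs z (i + 1) = insert (z (i + 1)) (zs z i) := by
  unfold zs
  rw [← Finset.insert_Icc_right_eq_Icc_add_one (by omega), Finset.image_insert]

/-- the two-row condition up to column `i`, with missing letter `c` -/
def Cnd (x : ℕ → ℕ) (i : ℕ) (z : ℕ → ℕ) (c : ℕ) : Prop :=
  c ∈ xs x i ∧ (∀ j j', 2 ≤ j → j < j' → j' ≤ i → z j ≠ z j') ∧ zs z i = (xs x i).erase c ∧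
    ∀ j, 2 ≤ j → j ≤ i → GrP (↑(zs z j)) (x j) (z j)

theorem notmem_xs (x : ℕ → ℕ) (n : ℕ) (hx : ∀ i j, 1 ≤ i → i < j → j ≤ n → x i ≠ x j) (i : ℕ)
    (hi : i + 1 ≤ n) : x (i + 1) ∉ xs x i := by
  unfold xs
  rw [Finset.mem_image]
  rintro ⟨j, hj, he⟩
  rw [Finset.mem_Icc] at hj
  exact hx j (i + 1) hj.1 (by omega) hi he

theorem notmem_zs (z : ℕ → ℕ) (i : ℕ) (hi : 1 ≤ i) 
    (hz : ∀ j j', 2 ≤ j → j < j' → j' ≤ i + 1 → z j ≠ z j') : z (i + 1) ∉ zs z i := by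
  unfold zs
  rw [Finset.mem_image]
  rintro ⟨j, hj, he⟩
  rw [Finset.mem_Icc] at hj
  exact hz j (i + 1) hj.1 (by omega) (le_refl _) he

theorem mem_zs_last (z : ℕ → ℕ) (i : ℕ) (hi : 2 ≤ i) : z i ∈ zs z i := by
  unfold zs
  exact Finset.mem_image_of_mem _ (Finset.mem_Icc.2 ⟨hi, le_refl _⟩)

theorem Cnd_stepA (x : ℕ → ℕ) (n : ℕ) (hx : ∀ i j, 1 ≤ i → i < j → j ≤ n → x i ≠ x j)
    (i : ℕ) (hi : 1 ≤ i) (hin : i + 1 ≤ n) (z : ℕ → ℕ) (c : ℕ) 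
    (hc : c ≠ x (i + 1)) : Cnd x (i + 1) z c ↔ z (i + 1) = x (i + 1) ∧ Cnd x i z c := by
  have hxn := notmem_xs x n hx i hin
  constructor
  · rintro ⟨h1, h2, h3, h4⟩
    have hzn := notmem_zs z i hi h2
    have hg := h4 (i + 1) (by omega) (le_refl _)
    have hxm : x (i + 1) ∈ zs z (i + 1) := by
      rw [h3, Finset.mem_erase, xs_succ]
      exact ⟨hc.symm, Finset.mem_insert_self _ _⟩
    have he : z (i + 1) = x (i + 1) := by
      rcases hg with ⟨g1, g2⟩ | ⟨g1, g2⟩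
      · exact le_antisymm (g2 _ hxm (le_refl _)) g1
      · have := (g2 _ hxm).1
        omega
    refine ⟨he, ?_, fun j j' g1 g2 g3 => h2 j j' g1 g2 (by omega), ?_,
      fun j g1 g2 => h4 j g1 (by omega)⟩
    · rw [xs_succ, Finset.mem_insert] at h1
      exact h1.resolve_left hc
    · rw [zs_succ z i hi, xs_succ, he, Finset.erase_insert_of_ne (Ne.symm hc)] at h3
      rw [he] at hzn
      have := congrArg (fun s => s.erase (x (i + 1))) h3
      rwa [Finset.erase_insert hzn, Finset.erase_insert] at this
      intro h
      exact hxn (Finset.mem_of_mem_erase h)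
  · rintro ⟨he, h1, h2, h3, h4⟩
    have hzm : z (i + 1) ∉ zs z i := by
      rw [he, h3]
      exact fun h => hxn (Finset.mem_of_mem_erase h)
    have h3' : zs z (i + 1) = (xs x (i + 1)).erase c := by
      rw [zs_succ z i hi, xs_succ, he, Finset.erase_insert_of_ne (Ne.symm hc), h3]
    refine ⟨?_, ?_, h3', ?_⟩
    · rw [xs_succ]; exact Finset.mem_insert_of_mem h1
    · intro j j' g1 g2 g3
      by_cases hj : j' = i + 1
      · subst hj
        intro e
        apply hzm
        rw [← e]
        exact Finset.mem_image_of_mem _ (Finset.mem_Icc.2 ⟨g1, by omega⟩)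
      · exact h2 j j' g1 g2 (by omega)
    · intro j g1 g2
      by_cases hj : j = i + 1
      · subst hj
        left
        rw [he]
        exact ⟨le_refl _, fun s _ h => h⟩
      · exact h4 j g1 (by omega)

theorem xs_nonempty (x : ℕ → ℕ) (i : ℕ) (hi : 1 ≤ i) : (xs x i).Nonempty :=
  ⟨x 1, Finset.mem_image_of_mem _ (Finset.mem_Icc.2 ⟨le_refl _, hi⟩)⟩

theorem Cnd_stepB (x : ℕ → ℕ) (n : ℕ) (hx : ∀ i j, 1 ≤ i → i < j → j ≤ n → x i ≠ x j)
    (i : ℕ) (hi : 1 ≤ i) (hin : i + 1 ≤ n) (z : ℕ → ℕ) :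
    Cnd x (i + 1) z (x (i + 1)) ↔ z (i + 1) = cyc (xs x i) (x (i + 1)) ∧
      Cnd x i z (cyc (xs x i) (x (i + 1))) := by
  have hxn := notmem_xs x n hx i hin
  have hne := xs_nonempty x i hi
  have hcm := cyc_mem (xs x i) hne (x (i + 1))
  have hcg := cyc_gr (xs x i) hne (x (i + 1))
  have hers : (xs x (i + 1)).erase (x (i + 1)) = xs x i := by
    rw [xs_succ, Finset.erase_insert hxn]
  generalize cyc (xs x i) (x (i + 1)) = c' at *
  constructor
  · rintro ⟨h1, h2, h3, h4⟩
    have hzn := notmem_zs z i hi h2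
    have hg := h4 (i + 1) (by omega) (le_refl _)
    rw [hers] at h3
    have hzm := mem_zs_last z (i + 1) (by omega)
    rw [h3] at hg hzm
    have he : z (i + 1) = c' := GrP_unique hzm hcm hg hcg
    refine ⟨he, hcm, fun j j' g1 g2 g3 => h2 j j' g1 g2 (by omega), ?_,
      fun j g1 g2 => h4 j g1 (by omega)⟩
    rw [← h3, zs_succ z i hi, ← he, Finset.erase_insert hzn]
  · rintro ⟨he, h1, h2, h3, h4⟩
    have hzm : z (i + 1) ∉ zs z i := by
      rw [he, h3]
      exact Finset.notMem_erase _ _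
    have h3' : zs z (i + 1) = xs x i := by
      rw [zs_succ z i hi, h3, he, Finset.insert_erase hcm]
    refine ⟨?_, ?_, by rw [h3', hers], ?_⟩
    · rw [xs_succ]; exact Finset.mem_insert_self _ _
    · intro j j' g1 g2 g3
      by_cases hj : j' = i + 1
      · subst hj
        intro e
        apply hzm
        rw [← e]
        exact Finset.mem_image_of_mem _ (Finset.mem_Icc.2 ⟨g1, by omega⟩)
      · exact h2 j j' g1 g2 (by omega)
    · intro j g1 g2
      by_cases hj : j = i + 1
      · subst hj
        rw [h3', he]
        exact hcg
      · exact h4 j g1 (by omega)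

/-- the unique upper row with missing letter `c` -/
noncomputable def YY (x : ℕ → ℕ) : ℕ → ℕ → ℕ → ℕ
  | 0, _ => fun _ => 0
  | i + 1, c => if c = x (i + 1) then
      Function.update (YY x i (cyc (xs x i) (x (i + 1)))) (i + 1) (cyc (xs x i) (x (i + 1)))
      else Function.update (YY x i c) (i + 1) (x (i + 1))

theorem YY_A (x : ℕ → ℕ) (i c j : ℕ) (hc : c ≠ x (i + 1)) (hj : j ≤ i) :
    YY x (i + 1) c j = YY x i c j := by
  rw [YY, if_neg hc, Function.update_of_ne (by omega)]

theorem YY_A' (x : ℕ → ℕ) (i c : ℕ) (hc : c ≠ x (i + 1)) :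
    YY x (i + 1) c (i + 1) = x (i + 1) := by
  rw [YY, if_neg hc, Function.update_self]

theorem YY_B (x : ℕ → ℕ) (i j : ℕ) (hj : j ≤ i) :
    YY x (i + 1) (x (i + 1)) j = YY x i (cyc (xs x i) (x (i + 1))) j := by
  rw [YY, if_pos rfl, Function.update_of_ne (by omega)]

theorem YY_B' (x : ℕ → ℕ) (i : ℕ) :
    YY x (i + 1) (x (i + 1)) (i + 1) = cyc (xs x i) (x (i + 1)) := by
  rw [YY, if_pos rfl, Function.update_self]

theorem Cnd_iff (x : ℕ → ℕ) (n : ℕ) (hx : ∀ i j, 1 ≤ i → i < j → j ≤ n → x i ≠ x j)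
    (i : ℕ) (hi : 1 ≤ i) (hin : i ≤ n) (z : ℕ → ℕ) : ∀ c, c ∈ xs x i →
    (Cnd x i z c ↔ ∀ j, 2 ≤ j → j ≤ i → z j = YY x i c j) := by
  induction i, hi using Nat.le_induction with
  | base =>
    intro c hc
    constructor
    · intro _ j h1 h2; omega
    · intro _
      refine ⟨hc, fun j j' h1 h2 h3 => by omega, ?_, fun j h1 h2 => by omega⟩
      simp only [xs, Finset.Icc_self, Finset.image_singleton, Finset.mem_singleton] at hc
      subst hc
      simp [zs, xs]
  | succ i hi ih =>
    intro c hc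
    have key : ∀ (v c' : ℕ), (z (i + 1) = v ∧ ∀ j, 2 ≤ j → j ≤ i → z j = YY x i c' j) →
        True := fun _ _ _ => trivial
    by_cases he : c = x (i + 1)
    · subst he
      rw [Cnd_stepB x n hx i hi hin z, ih (by omega) _ (cyc_mem _ (xs_nonempty x i hi) _)]
      constructor
      · rintro ⟨h1, h2⟩ j g1 g2
        by_cases hj : j = i + 1
        · subst hj; rw [YY_B', h1]
        · rw [YY_B x i j (by omega)]; exact h2 j g1 (by omega)
      · intro h
        refine ⟨by rw [h (i + 1) (by omega) (le_refl _), YY_B'], fun j g1 g2 => ?_⟩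
        rw [h j g1 (by omega), YY_B x i j g2]
    · have hc' : c ∈ xs x i := by
        rw [xs_succ, Finset.mem_insert] at hc
        exact hc.resolve_left he
      rw [Cnd_stepA x n hx i hi hin z c he, ih (by omega) c hc']
      constructor
      · rintro ⟨h1, h2⟩ j g1 g2
        by_cases hj : j = i + 1
        · subst hj; rw [YY_A' x i c he, h1]
        · rw [YY_A x i c j he (by omega)]; exact h2 j g1 (by omega)
      · intro h
        refine ⟨by rw [h (i + 1) (by omega) (le_refl _), YY_A' x i c he], fun j g1 g2 => ?_⟩
        rw [h j g1 (by omega), YY_A x i c j he g2]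

theorem Cnd_down (x : ℕ → ℕ) (n : ℕ) (hx : ∀ i j, 1 ≤ i → i < j → j ≤ n → x i ≠ x j)
    (z : ℕ → ℕ) (i : ℕ) (hi : 1 ≤ i) (hin : i ≤ n) (c : ℕ) (h : Cnd x n z c) :
    ∃ c', Cnd x i z c' := by
  induction hin using Nat.decreasingInduction with
  | self => exact ⟨c, h⟩
  | of_succ i hin ih =>
    obtain ⟨c', hc'⟩ := ih (by omega)
    by_cases he : c' = x (i + 1)
    · subst he
      exact ⟨_, ((Cnd_stepB x n hx i hi hin z).1 hc').2⟩
    · exact ⟨_, ((Cnd_stepA x n hx i hi hin z c' he).1 hc').2⟩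

/-- number of descents -/
noncomputable def dsc (x z : ℕ → ℕ) (i : ℕ) : ℕ := ((Icc 2 i).filter fun j => z j < x j).card

theorem dsc_succ (x z : ℕ → ℕ) (i : ℕ) (hi : 1 ≤ i) :
    dsc x z (i + 1) = dsc x z i + if z (i + 1) < x (i + 1) then 1 else 0 := by
  unfold dsc
  rw [← Finset.insert_Icc_right_eq_Icc_add_one (by omega), Finset.filter_insert]
  split_ifs
  · rw [Finset.card_insert_of_notMem]
    simp
  · rfl

theorem dsc_congr (x z z' : ℕ → ℕ) (i : ℕ) (h : ∀ j, 2 ≤ j → j ≤ i → z j = z' j) :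
    dsc x z i = dsc x z' i := by
  unfold dsc
  congr 1
  apply Finset.filter_congr
  intro j hj
  rw [Finset.mem_Icc] at hj
  rw [h j hj.1 hj.2]

theorem dsc_YY (x : ℕ → ℕ) (n : ℕ) (hx : ∀ i j, 1 ≤ i → i < j → j ≤ n → x i ≠ x j)
    (i : ℕ) (hi : 1 ≤ i) (hin : i ≤ n) : ∀ c, c ∈ xs x i →
    dsc x (YY x i c) i = if x 1 < c then 1 else 0 := by
  induction i, hi using Nat.le_induction with
  | base =>
    intro c hc
    simp only [xs, Finset.Icc_self, Finset.image_singleton, Finset.mem_singleton] at hc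
    subst hc
    simp [dsc]
  | succ i hi ih =>
    intro c hc
    rw [dsc_succ x _ i hi]
    by_cases he : c = x (i + 1)
    · subst he
      rw [YY_B', dsc_congr x _ _ i (fun j _ hj => YY_B x i j hj)]
      have hne := xs_nonempty x i hi
      have hcm := cyc_mem (xs x i) hne (x (i + 1))
      have hcg := cyc_gr (xs x i) hne (x (i + 1))
      rw [ih (by omega) _ hcm]
      have h1m : x 1 ∈ xs x i := Finset.mem_image_of_mem _ (Finset.mem_Icc.2 ⟨le_refl _, hi⟩)
      have h1n := hx 1 (i + 1) (le_refl _) (by omega) hin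
      rcases hcg with ⟨g1, g2⟩ | ⟨g1, g2⟩
      · have := g2 _ h1m
        split_ifs <;> omega
      · have := g2 _ h1m
        split_ifs <;> omega
    · have hc' : c ∈ xs x i := by
        rw [xs_succ, Finset.mem_insert] at hc
        exact hc.resolve_left he
      rw [YY_A' x i c he, dsc_congr x _ _ i (fun j _ hj => YY_A x i c j he hj),
        ih (by omega) c hc']
      simp

theorem xs_full (x : ℕ → ℕ) (n : ℕ) (hx : ∀ i j, 1 ≤ i → i < j → j ≤ n → x i ≠ x j)
    (hv : ∀ i, 1 ≤ i → i ≤ n → 1 ≤ x i ∧ x i ≤ n) : xs x n = Icc 1 n := by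
  unfold xs
  apply Finset.eq_of_subset_of_card_le
  · intro y hy
    rw [Finset.mem_image] at hy
    obtain ⟨i, hi, rfl⟩ := hy
    rw [Finset.mem_Icc] at *
    exact hv i hi.1 hi.2
  · rw [Finset.card_image_of_injOn]
    intro i hi j hj he
    rw [Finset.coe_Icc, Set.mem_Icc] at hi hj
    rcases lt_trichotomy i j with h | h | h
    · exact absurd he (hx i j hi.1 h hj.2)
    · exact h
    · exact absurd he.symm (hx j i hj.1 h hi.2)

theorem cyc_top (x : ℕ → ℕ) (n : ℕ) (hn : 2 ≤ n)
    (hx : ∀ i j, 1 ≤ i → i < j → j ≤ n → x i ≠ x j)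
    (hv : ∀ i, 1 ≤ i → i ≤ n → 1 ≤ x i ∧ x i ≤ n) :
    cyc (xs x (n - 1)) (x n) = if x n = n then 1 else x n + 1 := by
  obtain ⟨i, rfl⟩ : ∃ i, n = i + 1 := ⟨n - 1, by omega⟩
  rw [Nat.add_sub_cancel]
  have hers : xs x i = (Icc 1 (i + 1)).erase (x (i + 1)) := by
    rw [← xs_full x (i + 1) hx hv, xs_succ, 
      Finset.erase_insert (notmem_xs x (i + 1) hx i (le_refl _))]
  have hne := xs_nonempty x i (by omega)
  have hcm := cyc_mem (xs x i) hne (x (i + 1))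
  have hcg := cyc_gr (xs x i) hne (x (i + 1))
  have hb := hv (i + 1) (by omega) (le_refl _)
  apply GrP_unique hcm _ hcg
  · by_cases h : x (i + 1) = i + 1
    · rw [if_pos h]
      right
      refine ⟨by omega, fun s hs => ?_⟩
      rw [Finset.mem_coe, hers, Finset.mem_erase, Finset.mem_Icc] at hs
      omega
    · rw [if_neg h]
      left
      refine ⟨by omega, fun s hs h2 => ?_⟩
      rw [Finset.mem_coe, hers, Finset.mem_erase, Finset.mem_Icc] at hs
      omega
  · rw [Finset.mem_coe, hers, Finset.mem_erase, Finset.mem_Icc]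
    split_ifs <;> omega

/-- the new row together with its missing letter in column `1` -/
noncomputable def yy (n : ℕ) (x : ℕ → ℕ) (c : ℕ) : ℕ → ℕ := fun i => if i = 1 then c else YY x n c i

theorem yy_top (x : ℕ → ℕ) (n : ℕ) (hn : 2 ≤ n)
    (hx : ∀ i j, 1 ≤ i → i < j → j ≤ n → x i ≠ x j)
    (hv : ∀ i, 1 ≤ i → i ≤ n → 1 ≤ x i ∧ x i ≤ n)
    (c : ℕ) : yy n x c n = bnext n (x n) c := by
  obtain ⟨i, rfl⟩ : ∃ i, n = i + 1 := ⟨n - 1, by omega⟩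
  have := cyc_top x (i + 1) hn hx hv
  rw [Nat.add_sub_cancel] at this
  unfold yy bnext
  rw [if_neg (by omega)]
  by_cases he : c = x (i + 1)
  · subst he
    rw [YY_B', this, if_pos rfl]
  · rw [YY_A' x i c he, if_neg he]

theorem yy_val (x : ℕ → ℕ) (n : ℕ) (hn : 2 ≤ n)
    (hx : ∀ i j, 1 ≤ i → i < j → j ≤ n → x i ≠ x j)
    (hv : ∀ i, 1 ≤ i → i ≤ n → 1 ≤ x i ∧ x i ≤ n) (c : ℕ) (hc : c ∈ Icc 1 n) :
    (∀ i j, 1 ≤ i → i < j → j ≤ n → yy n x c i ≠ yy n x c j) ∧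
    (∀ i, 1 ≤ i → i ≤ n → 1 ≤ yy n x c i ∧ yy n x c i ≤ n) := by
  have hc' : c ∈ xs x n := by rw [xs_full x n hx hv]; exact hc
  obtain ⟨h1, h2, h3, h4⟩ := (Cnd_iff x n hx n (by omega) (le_refl _) (YY x n c) c hc').2
    (fun _ _ _ => rfl)
  have hm : ∀ j, 2 ≤ j → j ≤ n → YY x n c j ∈ (Icc 1 n).erase c := by
    intro j g1 g2
    rw [← xs_full x n hx hv, ← h3]
    exact Finset.mem_image_of_mem _ (Finset.mem_Icc.2 ⟨g1, g2⟩)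
  constructor
  · intro i j g1 g2 g3
    unfold yy
    rw [if_neg (show j ≠ 1 by omega)]
    by_cases hi : i = 1
    · rw [if_pos hi]
      exact (Finset.mem_erase.1 (hm j (by omega) g3)).1.symm
    · rw [if_neg hi]
      exact h2 i j (by omega) g2 g3
  · intro i g1 g2
    unfold yy
    by_cases hi : i = 1
    · rw [if_pos hi]
      exact Finset.mem_Icc.1 hc
    · rw [if_neg hi]
      exact Finset.mem_Icc.1 (Finset.mem_erase.1 (hm i (by omega) g2)).2

theorem yy_inj (x : ℕ → ℕ) (n : ℕ) (hn : 2 ≤ n)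
    (hx : ∀ i j, 1 ≤ i → i < j → j ≤ n → x i ≠ x j)
    (hv : ∀ i, 1 ≤ i → i ≤ n → 1 ≤ x i ∧ x i ≤ n) (c c' : ℕ) (hc : c ∈ Icc 1 n)
    (hc' : c' ∈ Icc 1 n) (h : ∀ i, 2 ≤ i → i ≤ n → yy n x c i = yy n x c' i) : c = c' := by
  rw [← xs_full x n hx hv] at hc hc'
  have hA := (Cnd_iff x n hx n (by omega) (le_refl _) (YY x n c) c hc).2
    (fun _ _ _ => rfl)
  have hB := (Cnd_iff x n hx n (by omega) (le_refl _) (YY x n c) c' hc').2 (by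
    intro j h1 h2
    have := h j h1 h2
    unfold yy at this
    rwa [if_neg (by omega), if_neg (by omega)] at this)
  have h3 := hA.2.2.1
  rw [hB.2.2.1] at h3
  by_contra hne
  have : c ∈ (xs x n).erase c' := Finset.mem_erase.2 ⟨hne, hc⟩
  rw [h3] at this
  exact Finset.notMem_erase _ _ this

theorem Two_iff (x : ℕ → ℕ) (n : ℕ) (hn : 2 ≤ n)
    (hx : ∀ i j, 1 ≤ i → i < j → j ≤ n → x i ≠ x j)
    (hv : ∀ i, 1 ≤ i → i ≤ n → 1 ≤ x i ∧ x i ≤ n) (lam : ℕ → ℕ)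
    (hlam : ∀ i, 1 ≤ i → i ≤ n → (2 ≤ lam i ↔ 2 ≤ i))
    (hlam1 : ∀ i, 1 ≤ i → i ≤ n → (1 ≤ lam i ↔ 2 ≤ i)) (z : ℕ → ℕ) :
    Two n lam x z ↔ ∃ c ∈ Icc 1 n, ∀ i, 1 ≤ i → i ≤ n → 2 ≤ lam i → z i = yy n x c i := by
  have hfull := xs_full x n hx hv
  have hset : ∀ i, 1 ≤ i → i ≤ n →
      {v | ∃ i', 1 ≤ i' ∧ i' ≤ i ∧ 2 ≤ lam i' ∧ v = z i'} = (↑(zs z i) : Set ℕ) := by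
    intro i h1 h2
    ext v
    simp only [zs, Finset.coe_image, Set.mem_image, Finset.coe_Icc, Set.mem_Icc]
    constructor
    · rintro ⟨i', g1, g2, g3, rfl⟩
      exact ⟨i', ⟨(hlam i' g1 (by omega)).1 g3, g2⟩, rfl⟩
    · rintro ⟨i', ⟨g1, g2⟩, rfl⟩
      exact ⟨i', by omega, g2, (hlam i' (by omega) (by omega)).2 g1, rfl⟩
  have hR : (∃ c ∈ Icc 1 n, ∀ i, 1 ≤ i → i ≤ n → 2 ≤ lam i → z i = yy n x c i) ↔
      ∃ c, Cnd x n z c := by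
    constructor
    · rintro ⟨c, hc, h⟩
      refine ⟨c, (Cnd_iff x n hx n (by omega) (le_refl _) z c (by rw [hfull]; exact hc)).2 ?_⟩
      intro j h1 h2
      rw [h j (by omega) h2 ((hlam j (by omega) h2).2 h1), yy, if_neg (by omega)]
    · rintro ⟨c, h⟩
      refine ⟨c, by rw [← hfull]; exact h.1, fun i h1 h2 h3 => ?_⟩
      have h4 := (hlam i h1 h2).1 h3
      rw [yy, if_neg (by omega)]
      exact (Cnd_iff x n hx n (by omega) (le_refl _) z c h.1).1 h i h4 h2
  rw [hR]
  constructor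
  · rintro ⟨h1, h2, h3, h4⟩
    have hinj : ∀ j j', 2 ≤ j → j < j' → j' ≤ n → z j ≠ z j' := fun j j' g1 g2 g3 =>
      h2 j j' (by omega) g2 g3 ((hlam j (by omega) (by omega)).2 g1)
        ((hlam j' (by omega) (by omega)).2 (by omega))
    have hsub : zs z n ⊆ xs x n := by
      intro v hv'
      rw [zs, Finset.mem_image] at hv'
      obtain ⟨j, hj, rfl⟩ := hv'
      rw [Finset.mem_Icc] at hj
      rw [hfull, Finset.mem_Icc]
      exact h1 j (by omega) hj.2 ((hlam j (by omega) hj.2).2 hj.1)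
    have hcard : (xs x n \ zs z n).card = 1 := by
      rw [Finset.card_sdiff_of_subset hsub, hfull, zs, Finset.card_image_of_injOn]
      · simp; omega
      · intro i hi j hj he
        rw [Finset.coe_Icc, Set.mem_Icc] at hi hj
        rcases lt_trichotomy i j with h | h | h
        · exact absurd he (hinj i j hi.1 h hj.2)
        · exact h
        · exact absurd he.symm (hinj j i hj.1 h hi.2)
    obtain ⟨c, hc⟩ := Finset.card_eq_one.1 hcard
    refine ⟨c, ?_, hinj, ?_, ?_⟩
    · have : c ∈ xs x n \ zs z n := by rw [hc]; exact Finset.mem_singleton_self _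
      exact (Finset.mem_sdiff.1 this).1
    · rw [← Finset.sdiff_singleton_eq_erase, ← hc, Finset.sdiff_sdiff_eq_self hsub]
    · intro j g1 g2
      rw [← hset j (by omega) g2]
      exact h4 j (by omega) g2 ((hlam j (by omega) g2).2 g1)
  · rintro ⟨c, h⟩
    have hD := fun i h1 h2 => Cnd_down x n hx z i h1 h2 c h
    obtain ⟨h1, h2, h3, h4⟩ := h
    refine ⟨?_, ?_, ?_, ?_⟩
    · intro i g1 g2 g3
      have : z i ∈ zs z n := 
        Finset.mem_image_of_mem _ (Finset.mem_Icc.2 ⟨(hlam i g1 g2).1 g3, g2⟩)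
      rw [h3, hfull] at this
      exact Finset.mem_Icc.1 (Finset.mem_of_mem_erase this)
    · intro i i' g1 g2 g3 g4 g5
      exact h2 i i' ((hlam i g1 (by omega)).1 g4) g2 g3
    · intro i i' g1 g2 g3 g4 g5 he
      obtain ⟨c', hc'⟩ := hD i g1 (by omega)
      have hm := mem_zs_last z i ((hlam i g1 (by omega)).1 g4)
      rw [hc'.2.2.1, he] at hm
      have hm := Finset.mem_of_mem_erase hm
      rw [xs, Finset.mem_image] at hm
      obtain ⟨j, hj, he⟩ := hm
      rw [Finset.mem_Icc] at hj
      exact hx j i' hj.1 (by omega) g3 he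
    · intro i g1 g2 g3
      rw [hset i g1 g2]
      exact h4 i ((hlam i g1 g2).1 g3) g2

theorem wt_aux (k m M p q : ℕ) (hpq : p ≠ q) (h1 : 1 ≤ p) (h2 : p ≤ k + 1) (h3 : 1 ≤ q)
    (hk : 1 ≤ k) :
    ((m + 1) * (if p < (if q = k + 1 then 1 else q + 1) then 1 else 0) +
      if (if q = k + 1 then 1 else q + 1) < q then M + m + 1 else 0) = wnext (k + 1) m M p q q := by
  unfold wnext
  by_cases hq : q = k + 1
  · rw [if_pos hq, if_neg (by omega), if_pos (by omega), if_pos ⟨rfl, hq⟩]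
    omega
  · rw [if_neg hq, if_neg (show ¬ q + 1 < q by omega),
      if_neg (show ¬ (q = q ∧ q = k + 1) from fun h => hq h.2)]
    by_cases hp : p < q
    · rw [if_pos (show p < q + 1 by omega), if_pos hp]; omega
    · rw [if_neg (show ¬ p < q + 1 by omega), if_neg hp]; omega

theorem wt_yy (x : ℕ → ℕ) (n : ℕ) (hn : 2 ≤ n)
    (hx : ∀ i j, 1 ≤ i → i < j → j ≤ n → x i ≠ x j)
    (hv : ∀ i, 1 ≤ i → i ≤ n → 1 ≤ x i ∧ x i ≤ n) (lam : ℕ → ℕ) (m M : ℕ)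
    (hlam1 : ∀ i, i < 2 → lam i = 0) (hlam2 : ∀ i, 2 ≤ i → i < n → lam i = m + 2)
    (hlam3 : lam n = M + m + 2) (c : ℕ) (hc : c ∈ Icc 1 n) :
    ∑ i ∈ (Icc 1 n).filter (fun i => 2 ≤ lam i ∧ yy n x c i < x i), (lam i - 1) =
      wnext n m M (x 1) (x n) c := by
  have hfull := xs_full x n hx hv
  have hct := cyc_top x n hn hx hv
  obtain ⟨k, rfl⟩ : ∃ i, n = i + 1 := ⟨n - 1, by omega⟩
  rw [Nat.add_sub_cancel] at hct
  have e1 : ∑ i ∈ (Icc 1 (k + 1)).filter (fun i => 2 ≤ lam i ∧ yy (k + 1) x c i < x i), (lam i - 1)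
      = (m + 1) * dsc x (YY x (k + 1) c) k + 
        if YY x (k + 1) c (k + 1) < x (k + 1) then M + m + 1 else 0 := by
    rw [← Finset.insert_Icc_right_eq_Icc_add_one (by omega), Finset.filter_insert]
    have e2 : ∑ i ∈ (Icc 1 k).filter (fun i => 2 ≤ lam i ∧ yy (k + 1) x c i < x i), (lam i - 1) =
        (m + 1) * dsc x (YY x (k + 1) c) k := by
      unfold dsc
      rw [mul_comm, ← smul_eq_mul, ← Finset.sum_const]
      apply Finset.sum_congr
      · ext i
        simp only [Finset.mem_filter, Finset.mem_Icc]
        constructor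
        · rintro ⟨⟨h1, h2⟩, h3, h4⟩
          have : 2 ≤ i := by
            by_contra hlt
            rw [hlam1 i (by omega)] at h3
            omega
          rw [yy, if_neg (by omega)] at h4
          exact ⟨⟨this, h2⟩, h4⟩
        · rintro ⟨⟨h1, h2⟩, h4⟩
          rw [yy, if_neg (by omega), hlam2 i h1 (by omega)]
          exact ⟨⟨by omega, h2⟩, by omega, h4⟩
      · intro i hi
        rw [Finset.mem_filter, Finset.mem_Icc] at hi
        rw [hlam2 i (by omega) (by omega)]
        omega
    have e3 : yy (k + 1) x c (k + 1) = YY x (k + 1) c (k + 1) := by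
      rw [yy, if_neg (by omega)]
    rw [hlam3, e3]
    by_cases h : YY x (k + 1) c (k + 1) < x (k + 1)
    · rw [if_pos ⟨by omega, h⟩, if_pos h, Finset.sum_insert (by simp), e2, hlam3]
      omega
    · rw [if_neg (fun hh => h hh.2), if_neg h, e2]
      omega
  rw [e1]
  have hne := xs_nonempty x k (by omega)
  have hcm := cyc_mem (xs x k) hne (x (k + 1))
  have h1n := hx 1 (k + 1) (le_refl _) (by omega) (le_refl _)
  have hv1 := hv 1 (le_refl _) (by omega)
  have hvn := hv (k + 1) (by omega) (le_refl _)
  by_cases he : c = x (k + 1)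
  · subst he
    rw [YY_B', dsc_congr x _ _ k (fun j _ hj => YY_B x k j hj), 
      dsc_YY x (k + 1) hx k (by omega) (by omega) _ hcm, hct]
    exact wt_aux k m M _ _ h1n hv1.1 hv1.2 hvn.1 (by omega)
  · have hc' : c ∈ xs x k := by
      rw [← hfull, xs_succ, Finset.mem_insert] at hc
      exact hc.resolve_left he
    rw [YY_A' x k c he, dsc_congr x _ _ k (fun j _ hj => YY_A x k c j he hj),
      dsc_YY x (k + 1) hx k (by omega) (by omega) _ hc']
    unfold wnext
    simp [he]

end CO

namespace CO
open Polynomial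

theorem TT_congr (n M b : ℕ) (D D' : ℕ → ℤ) (h : ∀ t, 1 ≤ t → t ≤ n → D t = D' t) :
    TT n M b D = TT n M b D' := by
  unfold TT
  apply Finset.sum_congr rfl
  intro p _
  have : (∀ t ∈ Icc 1 n, (p t : ℤ) = D t) ↔ (∀ t ∈ Icc 1 n, (p t : ℤ) = D' t) := by
    refine forall₂_congr fun t ht => ?_
    rw [Finset.mem_Icc] at ht
    rw [h t ht.1 ht.2]
  simp only [this]

theorem RR_congr (n m M a b : ℕ) (D D' : ℕ → ℤ) (h : ∀ t, 1 ≤ t → t ≤ n → D t = D' t) :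
    RR n m M a b D = RR n m M a b D' := by
  unfold RR
  apply Finset.sum_congr rfl
  intro l _
  apply Finset.sum_congr rfl
  intro p _
  have : (∀ t ∈ Icc 1 n, (p t : ℤ) - l t = D t) ↔ (∀ t ∈ Icc 1 n, (p t : ℤ) - l t = D' t) := by
    refine forall₂_congr fun t ht => ?_
    rw [Finset.mem_Icc] at ht
    rw [h t ht.1 ht.2]
  simp only [this]

theorem TT_neg (n M b : ℕ) (D : ℕ → ℤ) (t : ℕ) (h1 : 1 ≤ t) (h2 : t ≤ n) (h : D t < 0) :
    TT n M b D = 0 := by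
  unfold TT
  apply Finset.sum_eq_zero
  intro p _
  rw [if_neg]
  intro hp
  have := hp t (Finset.mem_Icc.2 ⟨h1, h2⟩)
  omega

theorem RR_neg (n m M a b : ℕ) (D : ℕ → ℤ) (t : ℕ) (h1 : 1 ≤ t) (h2 : t ≤ n) (h : D t < -m) :
    RR n m M a b D = 0 := by
  unfold RR
  apply Finset.sum_eq_zero
  intro l hl
  apply Finset.sum_eq_zero
  intro p _
  rw [if_neg]
  intro hp
  have ht : t ∈ Icc 1 n := Finset.mem_Icc.2 ⟨h1, h2⟩
  have := hp t ht
  rw [Finset.mem_piAntidiag] at hl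
  have h3 := Finset.single_le_sum (f := l) (fun i _ => Nat.zero_le _) ht
  have h4 : l t ≤ m := by
    rw [← hl.1]; exact h3
  omega

/-- the shape `(0, h, …, h, A)` -/
def shp (n A h : ℕ) : ℕ → ℕ := fun i => if i = n then A else if 2 ≤ i then h else 0

theorem shp_low (n A h : ℕ) : low (shp n A h) = shp n (A - 1) (h - 1) := by
  funext i
  simp only [low, shp]
  split_ifs <;> rfl

theorem shp_anti (n A h : ℕ) (hA : h ≤ A) : Antidominant n (shp n A h) := by
  intro i j h1 h2 h3
  simp only [shp]
  split_ifs <;> omega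

/-- content of the first row -/
def cnt (n : ℕ) (lam a : ℕ → ℕ) (t : ℕ) : ℕ :=
  ((Icc 1 n).filter fun i => 1 ≤ lam i ∧ a i = t).card

theorem tail_formula (n : ℕ) (hn : 2 ≤ n) (M : ℕ) : ∀ (h : ℕ), h ≤ 1 → ∀ (a K : ℕ → ℕ),
    (∀ i, 1 ≤ i → i ≤ n → 1 ≤ shp n (M + 1) h i → 1 ≤ a i ∧ a i ≤ n) →
    (∀ i i', 1 ≤ i → i < i' → i' ≤ n → 1 ≤ shp n (M + 1) h i → 1 ≤ shp n (M + 1) h i' →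
      a i ≠ a i') →
    cCoef n (shp n (M + 1) h) a K =
      TT n M (a n) (fun t => (K t : ℤ) - cnt n (shp n (M + 1) h) a t) := by
  induction M with
  | zero =>
    intro h hh a K ha hai
    have hl := shp_anti n (0 + 1) h (by omega)
    by_cases hk : ∃ t, 1 ≤ t ∧ t ≤ n ∧ K t < cnt n (shp n (0 + 1) h) a t
    · obtain ⟨t, h1, h2, h3⟩ := hk
      rw [cCoef_zero n _ a K hl t h1 h2 h3, TT_neg n _ _ _ t h1 h2 (by omega)]
    · push Not at hk
      have hno : ∀ i, ¬ 2 ≤ shp n (0 + 1) h i := by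
        intro i; simp only [shp]; split_ifs <;> omega
      rw [peel n (shp n (0 + 1) h) a K (fun t => K t - cnt n (shp n (0 + 1) h) a t) hl ha hai
        (by intro t h1 h2; have := hk t h1 h2; unfold cnt at *; omega) {0} (fun _ _ => 0)
        (by
          intro z
          constructor
          · intro _
            exact ⟨0, Finset.mem_singleton_self _, fun i _ _ h => absurd h (hno i)⟩
          · intro _
            exact ⟨fun i _ _ h => absurd h (hno i), fun i _ _ _ _ h => absurd h (hno i),
              fun i _ _ _ _ h => absurd h (hno i), fun i _ _ h => absurd h (hno i)⟩)
        (by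
          intro c hc c' hc' _
          rw [Finset.mem_singleton] at hc hc'
          rw [hc, hc'])]
      rw [Finset.sum_singleton, shp_low]
      have hz : ∀ i, 1 ≤ i → i ≤ n → shp n (0 + 1 - 1) (h - 1) i = 0 := by
        intro i h1 h2; simp only [shp]; split_ifs <;> omega
      have hf : (Icc 1 n).filter (fun i => 2 ≤ shp n (0 + 1) h i ∧ 0 < a i) = ∅ := by
        rw [Finset.filter_eq_empty_iff]
        intro i _ hi
        exact hno i hi.1
      rw [hf, Finset.sum_empty, pow_zero, one_mul]
      by_cases hall : ∀ t, 1 ≤ t → t ≤ n → K t - cnt n (shp n (0 + 1) h) a t = 0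
      · rw [cCoef_empty n _ _ _ hz hall, TT_zero_pos]
        · omega
        · intro t ht
          rw [Finset.mem_Icc] at ht
          have := hall t ht.1 ht.2
          have := hk t ht.1 ht.2
          omega
      · rw [cCoef_empty_zero n _ _ _ hz hall, TT_zero_neg]
        intro hc
        apply hall
        intro t h1 h2
        have := hc t (Finset.mem_Icc.2 ⟨h1, h2⟩)
        omega
  | succ M ih =>
    intro h hh a K ha hai
    have hl := shp_anti n (M + 1 + 1) h (by omega)
    by_cases hk : ∃ t, 1 ≤ t ∧ t ≤ n ∧ K t < cnt n (shp n (M + 1 + 1) h) a t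
    · obtain ⟨t, h1, h2, h3⟩ := hk
      rw [cCoef_zero n _ a K hl t h1 h2 h3, TT_neg n _ _ _ t h1 h2 (by omega)]
    · push Not at hk
      have hno : ∀ i, 2 ≤ shp n (M + 1 + 1) h i ↔ i = n := by
        intro i; simp only [shp]; split_ifs <;> omega
      have han := ha n (by omega) (le_refl _) (by simp [shp])
      rw [peel n (shp n (M + 1 + 1) h) a K (fun t => K t - cnt n (shp n (M + 1 + 1) h) a t) hl ha hai
        (by intro t h1 h2; have := hk t h1 h2; unfold cnt at *; omega) (Icc 1 n) (fun c _ => c)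
        (by
          intro z
          constructor
          · intro hz
            refine ⟨z n, Finset.mem_Icc.2 (hz.1 n (by omega) (le_refl _) ((hno n).2 rfl)), ?_⟩
            intro i _ _ h
            rw [(hno i).1 h]
          · rintro ⟨c, hc, hz⟩
            have hz := hz n (by omega) (le_refl _) ((hno n).2 rfl)
            refine ⟨fun i _ _ h => ?_, fun i _ _ h1 h2 h => ?_,
              fun i _ _ h1 h2 h => ?_, fun i _ _ h5 => ?_⟩
            · rw [(hno i).1 h, hz]; exact Finset.mem_Icc.1 hc
            · have := (hno i).1 h; omega
            · have := (hno i).1 h; omega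
            · obtain rfl := (hno i).1 h5
              have hs : ∀ s ∈ {x | ∃ i', 1 ≤ i' ∧ i' ≤ i ∧
                  2 ≤ shp i (M + 1 + 1) h i' ∧ x = z i'}, s = z i := by
                rintro s ⟨i', _, _, h3, rfl⟩
                rw [(hno i').1 h3]
              by_cases hle : a i ≤ z i
              · exact Or.inl ⟨hle, fun s hs' _ => le_of_eq (hs s hs').symm⟩
              · refine Or.inr ⟨by omega, fun s hs' => ?_⟩
                rw [hs s hs']
                omega)
        (by
          intro c hc c' hc' h
          exact h n (by omega) (le_refl _) ((hno n).2 rfl))]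
      rw [TT_step n M (a n) _ han.1 han.2]
      apply Finset.sum_congr rfl
      intro c hc
      rw [Finset.mem_Icc] at hc
      have h0 : h - 1 = 0 := by omega
      rw [shp_low, Nat.add_sub_cancel, h0]
      have hone : ∀ i, 1 ≤ shp n (M + 1) 0 i ↔ i = n := by
        intro i; simp only [shp]; split_ifs <;> omega
      rw [ih 0 (by omega) (fun _ => c) _ (fun i _ _ _ => hc) (by
        intro i i' h1 h2 h3 h4 h5
        have := (hone i).1 h4
        omega)]
      congr 1
      · congr 1
        rw [Finset.sum_filter, Finset.sum_eq_single n]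
        · by_cases hca : c < a n
          · rw [if_pos ⟨(hno n).2 rfl, hca⟩, if_pos hca]
            simp [shp]
          · rw [if_neg (fun h => hca h.2), if_neg hca]
        · intro i _ hi
          rw [if_neg (fun h => hi ((hno i).1 h.1))]
        · intro hi
          exact absurd (Finset.mem_Icc.2 ⟨by omega, le_refl _⟩) hi
      · apply TT_congr
        intro t h1 h2
        have e : cnt n (shp n (M + 1) 0) (fun _ => c) t = if t = c then 1 else 0 := by
          unfold cnt
          by_cases htc : t = c
          · rw [if_pos htc, Finset.card_eq_one]
            refine ⟨n, ?_⟩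
            ext i
            simp only [Finset.mem_filter, Finset.mem_Icc, Finset.mem_singleton, hone]
            constructor
            · exact fun h => h.2.1
            · intro h; exact ⟨by omega, h, htc.symm⟩
          · rw [if_neg htc, Finset.card_eq_zero, Finset.filter_eq_empty_iff]
            intro i _ hi
            exact htc hi.2.symm
        have := hk t h1 h2
        rw [e]
        split_ifs <;> push_cast [Nat.cast_sub this] <;> ring

theorem cnt_shp (n A h : ℕ) (hn : 2 ≤ n) (hA : 1 ≤ A) (hh : 1 ≤ h) (a : ℕ → ℕ)
    (hx : ∀ i j, 1 ≤ i → i < j → j ≤ n → a i ≠ a j)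
    (hv : ∀ i, 1 ≤ i → i ≤ n → 1 ≤ a i ∧ a i ≤ n) (t : ℕ) (h1 : 1 ≤ t) (h2 : t ≤ n) :
    cnt n (shp n A h) a t = if t = a 1 then 0 else 1 := by
  have hone : ∀ i, 1 ≤ i → i ≤ n → (1 ≤ shp n A h i ↔ 2 ≤ i) := by
    intro i g1 g2; simp only [shp]; split_ifs <;> omega
  have hne : ∀ i j, 1 ≤ i → i ≤ n → 1 ≤ j → j ≤ n → a i = a j → i = j := by
    intro i j g1 g2 g3 g4 he
    rcases lt_trichotomy i j with h | h | h
    · exact absurd he (hx i j g1 h g4)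
    · exact h
    · exact absurd he.symm (hx j i g3 h g2)
  have ht : t ∈ xs a n := by
    rw [xs_full a n hx hv]; exact Finset.mem_Icc.2 ⟨h1, h2⟩
  rw [xs, Finset.mem_image] at ht
  obtain ⟨i0, hi0, rfl⟩ := ht
  rw [Finset.mem_Icc] at hi0
  unfold cnt
  by_cases h01 : a i0 = a 1
  · rw [if_pos h01, Finset.card_eq_zero, Finset.filter_eq_empty_iff]
    intro i hi hc
    rw [Finset.mem_Icc] at hi
    have := (hone i hi.1 hi.2).1 hc.1
    have := hne i 1 hi.1 hi.2 (le_refl _) (by omega) (by rw [hc.2, h01])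
    omega
  · rw [if_neg h01, Finset.card_eq_one]
    refine ⟨i0, ?_⟩
    ext i
    simp only [Finset.mem_filter, Finset.mem_Icc, Finset.mem_singleton]
    constructor
    · rintro ⟨g1, g2, g3⟩
      exact hne i i0 g1.1 g1.2 hi0.1 hi0.2 g3
    · rintro rfl
      refine ⟨hi0, (hone i hi0.1 hi0.2).2 ?_, rfl⟩
      by_contra hlt
      have : i = 1 := by omega
      rw [this] at h01
      exact h01 rfl

theorem main_formula (n : ℕ) (hn : 2 ≤ n) (M m : ℕ) : ∀ (a K : ℕ → ℕ),
    (∀ i j, 1 ≤ i → i < j → j ≤ n → a i ≠ a j) →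
    (∀ i, 1 ≤ i → i ≤ n → 1 ≤ a i ∧ a i ≤ n) →
    cCoef n (shp n (M + m + 1) (m + 1)) a K =
      RR n m M (a 1) (a n) (fun t => (K t : ℤ) - m - if t = a 1 then 0 else 1) := by
  induction m with
  | zero =>
    intro a K hx hv
    rw [RR_zero n M _ _ (by omega), Nat.add_zero, Nat.zero_add,
      tail_formula n hn M 1 (le_refl _) a K (fun i h1 h2 _ => hv i h1 h2)
        (fun i i' h1 h2 h3 _ _ => hx i i' h1 h2 h3)]
    apply TT_congr
    intro t h1 h2
    rw [cnt_shp n _ _ hn (by omega) (by omega) a hx hv t h1 h2]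
    split_ifs <;> simp
  | succ m ih =>
    intro a K hx hv
    have hl := shp_anti n (M + (m + 1) + 1) (m + 1 + 1) (by omega)
    have hcnt := cnt_shp n (M + (m + 1) + 1) (m + 1 + 1) hn (by omega) (by omega) a hx hv
    by_cases hk : ∃ t, 1 ≤ t ∧ t ≤ n ∧ K t < cnt n (shp n (M + (m + 1) + 1) (m + 1 + 1)) a t
    · obtain ⟨t, h1, h2, h3⟩ := hk
      rw [cCoef_zero n _ a K hl t h1 h2 h3, RR_neg n _ _ _ _ _ t h1 h2]
      rw [hcnt t h1 h2] at h3
      by_cases hc : t = a 1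
      · rw [if_pos hc] at h3; omega
      · rw [if_neg hc] at *
        push_cast
        omega
    · push Not at hk
      have h1n := hx 1 n (le_refl _) (by omega) (le_refl _)
      have hv1 := hv 1 (le_refl _) (by omega)
      have hvn := hv n (by omega) (le_refl _)
      have hlam : ∀ i, 1 ≤ i → i ≤ n → (2 ≤ shp n (M + (m + 1) + 1) (m + 1 + 1) i ↔ 2 ≤ i) := by
        intro i g1 g2; simp only [shp]; split_ifs <;> omega
      have hlam1 : ∀ i, 1 ≤ i → i ≤ n → (1 ≤ shp n (M + (m + 1) + 1) (m + 1 + 1) i ↔ 2 ≤ i) := by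
        intro i g1 g2; simp only [shp]; split_ifs <;> omega
      rw [peel n _ a K (fun t => K t - cnt n (shp n (M + (m + 1) + 1) (m + 1 + 1)) a t) hl
        (fun i h1 h2 _ => hv i h1 h2)
        (fun i i' h1 h2 h3 _ _ => hx i i' h1 h2 h3)
        (by intro t h1 h2; have := hk t h1 h2; unfold cnt at *; omega) (Icc 1 n) (yy n a)
        (Two_iff a n hn hx hv _ hlam hlam1)
        (fun c hc c' hc' h => yy_inj a n hn hx hv c c' hc hc' (fun i h1 h2 =>
          h i (by omega) h2 ((hlam i (by omega) h2).2 h1)))]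
      rw [RR_step n m M (a 1) (a n) _ hv1.1 hv1.2 hvn.1 hvn.2 h1n]
      apply Finset.sum_congr rfl
      intro c hc
      obtain ⟨hx', hv'⟩ := yy_val a n hn hx hv c hc
      rw [wt_yy a n hn hx hv _ m M (by intro i hi; simp only [shp]; split_ifs <;> omega)
        (by intro i h1 h2; simp only [shp]; split_ifs <;> omega)
        (by simp only [shp, if_true]; omega) c hc]
      rw [shp_low]
      have e : M + (m + 1) + 1 - 1 = M + m + 1 := by omega
      rw [e, Nat.add_sub_cancel, ih (yy n a c) _ hx' hv', yy_top a n hn hx hv c]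
      congr 1
      have e1 : yy n a c 1 = c := by simp [yy]
      rw [e1]
      apply RR_congr
      intro t h1 h2
      have := hk t h1 h2
      rw [hcnt t h1 h2] at *
      split_ifs at * <;> push_cast [Nat.cast_sub this] <;> ring

end CO

namespace CO
open Polynomial

theorem aT_mem (n j : ℕ) (hj1 : 2 ≤ j) (hj2 : j ≤ n) (i : ℕ) (h1 : 2 ≤ i) (h2 : i < n) :
    2 ≤ aTuple n j 1 i ∧ aTuple n j 1 i ≤ n ∧ aTuple n j 1 i ≠ j := by
  have hlen : ((((Finset.Icc 1 n).erase j).erase 1).sort (· ≤ ·)).length = n - 2 := by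
    rw [Finset.length_sort, Finset.card_erase_of_mem, Finset.card_erase_of_mem]
    · simp; omega
    · simp; omega
    · simp; omega
  unfold aTuple
  rw [if_neg (by omega), List.getD_eq_getElem _ _ (by rw [hlen]; omega)]
  have := List.getElem_mem (l := (((Finset.Icc 1 n).erase j).erase 1).sort (· ≤ ·))
    (n := n - 1 - i) (by rw [hlen]; omega)
  rw [Finset.mem_sort, Finset.mem_erase, Finset.mem_erase, Finset.mem_Icc] at this
  omega

theorem aT_inj (n j : ℕ) (hj1 : 2 ≤ j) (hj2 : j ≤ n) (i i' : ℕ) (h1 : 2 ≤ i) (h2 : i < i')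
    (h3 : i' < n) : aTuple n j 1 i ≠ aTuple n j 1 i' := by
  have hlen : ((((Finset.Icc 1 n).erase j).erase 1).sort (· ≤ ·)).length = n - 2 := by
    rw [Finset.length_sort, Finset.card_erase_of_mem, Finset.card_erase_of_mem]
    · simp; omega
    · simp; omega
    · simp; omega
  unfold aTuple
  rw [if_neg (by omega), if_neg (by omega), List.getD_eq_getElem _ _ (by rw [hlen]; omega),
    List.getD_eq_getElem _ _ (by rw [hlen]; omega)]
  intro he
  have := (List.Nodup.getElem_inj_iff (Finset.sort_nodup _ _)).1 he
  omega

/-- the full bottom row with the missing letter in column `1` -/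
def aFull (n j : ℕ) : ℕ → ℕ := fun i => if i = 1 then j else aTuple n j 1 i

theorem aFull_n (n j : ℕ) (hn : 3 ≤ n) : aFull n j n = 1 := by
  unfold aFull aTuple
  rw [if_neg (by omega), if_pos rfl]

theorem aFull_mid (n j : ℕ) (i : ℕ) (h1 : 2 ≤ i) : aFull n j i = aTuple n j 1 i := by
  unfold aFull
  rw [if_neg (by omega)]

theorem aFull_inj (n j : ℕ) (hn : 3 ≤ n) (hj1 : 2 ≤ j) (hj2 : j ≤ n) :
    ∀ i i', 1 ≤ i → i < i' → i' ≤ n → aFull n j i ≠ aFull n j i' := by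
  intro i i' h1 h2 h3
  have e1 : aFull n j 1 = j := by simp [aFull]
  have en := aFull_n n j hn
  by_cases hi : i = 1
  · subst hi
    rw [e1]
    by_cases hi' : i' = n
    · subst hi'; rw [en]; omega
    · rw [aFull_mid n j i' (by omega)]
      exact (aT_mem n j hj1 hj2 i' (by omega) (by omega)).2.2.symm
  · by_cases hi' : i' = n
    · subst hi'
      rw [en, aFull_mid i' j i (by omega)]
      have := aT_mem i' j hj1 hj2 i (by omega) (by omega)
      omega
    · rw [aFull_mid n j i (by omega), aFull_mid n j i' (by omega)]
      exact aT_inj n j hj1 hj2 i i' (by omega) h2 (by omega)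

theorem aFull_val (n j : ℕ) (hn : 3 ≤ n) (hj1 : 2 ≤ j) (hj2 : j ≤ n) :
    ∀ i, 1 ≤ i → i ≤ n → 1 ≤ aFull n j i ∧ aFull n j i ≤ n := by
  intro i h1 h3
  by_cases hi : i = 1
  · subst hi
    have e1 : aFull n j 1 = j := by simp [aFull]
    rw [e1]; omega
  · by_cases hi' : i = n
    · subst hi'; rw [aFull_n i j hn]; omega
    · rw [aFull_mid n j i (by omega)]
      have := aT_mem n j hj1 hj2 i (by omega) (by omega)
      omega

theorem cBar_eq_RR (n : ℕ) (hn : 3 ≤ n) (m₁ m₂ j : ℕ) (hj1 : 2 ≤ j) (hj2 : j ≤ n) (k : ℕ → ℕ) :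
    cBar n (shp n (m₁ + m₂ + 1) (m₂ + 1)) j 1 (fun i => if i = j then k i else k i + 1) =
      RR n m₂ m₁ j 1 (fun t => (k t : ℤ) - m₂) := by
  unfold cBar
  rw [cCoef_congr n _ _ (aFull n j) _ (shp_anti _ _ _ (by omega))]
  · rw [main_formula n (by omega) m₁ m₂ _ _ (aFull_inj n j hn hj1 hj2) (aFull_val n j hn hj1 hj2)]
    have e1 : aFull n j 1 = j := by simp [aFull]
    rw [e1, aFull_n n j hn]
    apply RR_congr
    intro t _ _
    split_ifs <;> push_cast <;> ring
  · intro i h1 h2 h3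
    rw [aFull_mid]
    simp only [shp] at h3
    split_ifs at h3 <;> omega

/-- zero-extended one-based lift of a tuple -/
def lf (n : ℕ) (k : Fin n → ℕ) : ℕ → ℕ :=
  fun t => if h : 1 ≤ t ∧ t ≤ n then k ⟨t - 1, by omega⟩ else 0

theorem lf_succ (n : ℕ) (k : Fin n → ℕ) (i : Fin n) : lf n k (i + 1) = k i := by
  unfold lf
  rw [dif_pos ⟨by omega, by omega⟩]
  congr 1

theorem liftFin_eq (n : ℕ) (k : Fin n → ℕ) (t : ℕ) (h1 : 1 ≤ t) (h2 : t ≤ n) :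
    liftFin n k t = lf n k t := by
  unfold lf liftFin
  rw [dif_pos (show t - 1 < n by omega), dif_pos (show 1 ≤ t ∧ t ≤ n from ⟨h1, h2⟩)]

theorem sum_lf (n : ℕ) (f : ℕ → ℕ) : ∑ t ∈ Icc 1 n, f t = ∑ i : Fin n, f (i + 1) := by
  rw [Fin.sum_univ_eq_sum_range (fun i => f (i + 1)) n, Finset.range_eq_Ico,
    Finset.sum_Ico_add' f 0 n 1, zero_add]
  rfl

theorem forall_Icc (n : ℕ) (P : ℕ → Prop) : (∀ t ∈ Icc 1 n, P t) ↔ ∀ i : Fin n, P (i + 1) := by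
  constructor
  · intro h i
    exact h _ (Finset.mem_Icc.2 ⟨by omega, by omega⟩)
  · intro h t ht
    rw [Finset.mem_Icc] at ht
    have := h ⟨t - 1, by omega⟩
    simp only at this
    rwa [Nat.sub_add_cancel ht.1] at this

theorem RR_fin (n : ℕ) (h0 : 0 < n) (m₁ m₂ j : ℕ) (hj1 : 2 ≤ j) (k : ℕ → ℕ) :
    RR n m₂ m₁ j 1 (fun t => (k t : ℤ) - m₂) =
      ∑ lp ∈ ((Fintype.piFinset fun _ : Fin n => Finset.range (m₂ + 1)) ×ˢ
            (Fintype.piFinset fun _ : Fin n => Finset.range (m₁ + 1))).filter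
          fun lp => (∑ i, lp.1 i) = m₂ ∧ (∑ i, lp.2 i) = m₁ ∧
            ∀ i : Fin n, lp.2 i + (∑ α ∈ Finset.univ.erase i, lp.1 α) = k ((i : ℕ) + 1),
        Polynomial.X ^ (lp.1 ⟨0, h0⟩ * lp.2 ⟨0, h0⟩ +
            ∑ α ∈ Finset.Icc (j + 1) n, liftFin n lp.1 α) *
          qMultinomial n m₂ (liftFin n lp.1) * qMultinomial n m₁ (liftFin n lp.2) := by
  unfold RR
  rw [← Finset.sum_product', ← Finset.sum_filter]
  have hcond : ∀ (l p : Fin n → ℕ), (∑ i, l i) = m₂ → 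
      ((∀ i : Fin n, p i + (∑ α ∈ Finset.univ.erase i, l α) = k ((i : ℕ) + 1)) ↔
       (∀ i : Fin n, (p i : ℤ) - l i = (k (i + 1) : ℤ) - m₂)) := by
    intro l p hl
    refine forall_congr' fun i => ?_
    have := Finset.add_sum_erase Finset.univ l (Finset.mem_univ i)
    omega
  symm
  apply Finset.sum_bij' (fun (lp : (Fin n → ℕ) × (Fin n → ℕ)) _ => (lf n lp.1, lf n lp.2))
    (fun (lp : (ℕ → ℕ) × (ℕ → ℕ)) _ =>
      ((fun i : Fin n => lp.1 (i + 1)), (fun i : Fin n => lp.2 (i + 1))))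
  · rintro ⟨l, p⟩ h
    simp only [Finset.mem_filter, Finset.mem_product] at h
    obtain ⟨-, h1, h2, h3⟩ := h
    simp only [Finset.mem_filter, Finset.mem_product, Finset.mem_piAntidiag, sum_lf, lf_succ,
      forall_Icc]
    refine ⟨⟨⟨h1, ?_⟩, h2, ?_⟩, (hcond l p h1).1 h3⟩
    · intro t ht
      rw [Finset.mem_Icc]
      by_contra hc
      exact ht (by rw [lf, dif_neg hc])
    · intro t ht
      rw [Finset.mem_Icc]
      by_contra hc
      exact ht (by rw [lf, dif_neg hc])
  · rintro ⟨l, p⟩ h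
    simp only [Finset.mem_filter, Finset.mem_product, Finset.mem_piAntidiag, sum_lf,
      forall_Icc] at h
    obtain ⟨⟨⟨h1, -⟩, h2, -⟩, h3⟩ := h
    simp only [Finset.mem_filter, Finset.mem_product, Fintype.mem_piFinset, Finset.mem_range]
    refine ⟨⟨fun i => ?_, fun i => ?_⟩, h1, h2, (hcond _ _ h1).2 h3⟩
    · have := Finset.single_le_sum (f := fun i : Fin n => l (i + 1)) (fun i _ => Nat.zero_le _)
        (Finset.mem_univ i)
      omega
    · have := Finset.single_le_sum (f := fun i : Fin n => p (i + 1)) (fun i _ => Nat.zero_le _)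
        (Finset.mem_univ i)
      omega
  · rintro ⟨l, p⟩ h
    simp only [lf_succ]
  · rintro ⟨l, p⟩ h
    simp only [Finset.mem_filter, Finset.mem_product, Finset.mem_piAntidiag] at h
    have hh : ∀ f : ℕ → ℕ, (∀ t, f t ≠ 0 → t ∈ Icc 1 n) → 
        lf n (fun i : Fin n => f (i + 1)) = f := by
      intro f hf
      funext t
      unfold lf
      by_cases ht : 1 ≤ t ∧ t ≤ n
      · rw [dif_pos ht]
        simp only [Nat.sub_add_cancel ht.1]
      · rw [dif_neg ht]
        by_contra hc
        exact ht (Finset.mem_Icc.1 (hf t (fun e => hc e.symm)))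
    simp only [hh l h.1.1.2, hh p h.1.2.2]
  · rintro ⟨l, p⟩ h
    simp only
    rw [qM_congr n m₂ (liftFin n l) (lf n l) (fun t ht =>
        liftFin_eq n l t (Finset.mem_Icc.1 ht).1 (Finset.mem_Icc.1 ht).2),
      qM_congr n m₁ (liftFin n p) (lf n p) (fun t ht =>
        liftFin_eq n p t (Finset.mem_Icc.1 ht).1 (Finset.mem_Icc.1 ht).2)]
    have e1 : ∀ f : Fin n → ℕ, lf n f 1 = f ⟨0, h0⟩ := by
      intro f
      exact lf_succ n f ⟨0, h0⟩
    have e2 : ltS (lf n p) 1 = 0 := by simp [ltS]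
    have e3 : ∑ α ∈ Finset.Icc (j + 1) n, liftFin n l α = gtS n (lf n l) j := by
      unfold gtS
      apply Finset.sum_congr rfl
      intro t ht
      rw [Finset.mem_Icc] at ht
      exact liftFin_eq n l t (by omega) ht.2
    rw [e1, e1, e2, e3]
    simp only [Nat.add_zero]

end CO


open CO in
/-- Closed formula for `c^{λ⁺}_{j|1}` with
`λ⁺ = (0, m₂+1, …, m₂+1, m₁+m₂+1)`:
`c^{λ⁺}_{j|1}(k₁+1,…,k_{j-1}+1,k_j,k_{j+1}+1,…,k_n+1)
  = Σ_{l,p} q^{l₁p₁ + l_{j+1} + ⋯ + l_n} binom_q(m₂; l) binom_q(m₁; p)`,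
the sum being over `l, p ∈ ℤ_{≥0}^n` with `Σl = m₂`, `Σp = m₁`, and
`p_i + Σ_{α≠i} l_α = k_i` for all `i`. -/
theorem cbar_closed_formula (n : ℕ) (hn : 3 ≤ n) (m₁ m₂ : ℕ)
    (lamP : ℕ → ℕ)
    (hlamP : lamP = fun i => if i = n then m₁ + m₂ + 1 else if 2 ≤ i then m₂ + 1 else 0)
    (j : ℕ) (hj1 : 2 ≤ j) (hj2 : j ≤ n) (k : ℕ → ℕ) :
    cBar n lamP j 1 (fun i => if i = j then k i else k i + 1)
      = ∑ lp ∈ ((Fintype.piFinset fun _ : Fin n => Finset.range (m₂ + 1)) ×ˢ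
            (Fintype.piFinset fun _ : Fin n => Finset.range (m₁ + 1))).filter
          fun lp => (∑ i, lp.1 i) = m₂ ∧ (∑ i, lp.2 i) = m₁ ∧
            ∀ i : Fin n, lp.2 i + (∑ α ∈ Finset.univ.erase i, lp.1 α) = k ((i : ℕ) + 1),
        Polynomial.X ^ (lp.1 ⟨0, by omega⟩ * lp.2 ⟨0, by omega⟩ +
            ∑ α ∈ Finset.Icc (j + 1) n, liftFin n lp.1 α) *
          qMultinomial n m₂ (liftFin n lp.1) * qMultinomial n m₁ (liftFin n lp.2) := by
  have e : lamP = shp n (m₁ + m₂ + 1) (m₂ + 1) := hlamP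
  rw [e, cBar_eq_RR n hn m₁ m₂ j hj1 hj2 k, RR_fin n (lt_of_lt_of_le (by norm_num) hn) m₁ m₂ j hj1 k]
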